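/- arXiv:1202.4406 — 6 statements merged into one kernel-verified Lean document; each statement's English description precedes it below -/
import Mathlib

section
/- A finite simple graph G is a proper interval graph if and only if its closed neighborhood hypergraph N[G] is an interval hypergraph. -/
/-!
In a proper interval model the left and the right endpoints sort the vertices in the same way.
If `y` lies between `x` and `z` in that order, then its interval starts before that of `z` and
ends after that of `x`, so it meets every interval met by both: closed neighborhoods are intervals
of the order.

Conversely, let every closed neighborhood be an interval of a linear order on the vertices. Symmetry
of adjacency makes the down-closure `↓N[v]` grow with `v`, and for `u ≤ v` we have `v ∈ N[u]`
exactly when `v ∈ ↓N[u]`. The down-sets are linearly ordered, so the intervals from `↓v` to `↓N[v]`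
represent `G`, and breaking the ties between equal right endpoints by the order of the vertices
makes them incomparable. For finitely many vertices only finitely many endpoints occur, and these
can be replaced by integers.
-/

open Set

/-- The closed neighborhood of a vertex: the vertex together with its neighbors. -/
def ClosedNbhd {V : Type*} (G : SimpleGraph V) (v : V) : Set V :=
  {u | u = v ∨ G.Adj u v}

/-- `S` is an interval (order-convex set) with respect to the order relation `r`. -/
def IsIntervalWrt {α : Type*} (r : α → α → Prop) (S : Set α) : Prop :=
  ∀ x y z, r x y → r y z → x ∈ S → z ∈ S → y ∈ S

/-- A family of hyperedges forms an interval hypergraph: some linear order on the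
vertices makes every hyperedge an interval (a set of consecutive elements). -/
def IsIntervalHypergraph {α ι : Type*} (H : ι → Set α) : Prop :=
  ∃ r : α → α → Prop, IsLinearOrder α r ∧ ∀ i, IsIntervalWrt r (H i)

/-- `S ⊆ ZMod n` is an arc: a set of (at most `n`) circularly consecutive points. -/
def IsArc (n : ℕ) (S : Set (ZMod n)) : Prop :=
  ∃ a : ZMod n, ∃ k : ℕ, k ≤ n ∧ S = {x | ∃ i : ℕ, i < k ∧ x = a + (i : ZMod n)}

/-- Arcs `A` and `B` share their start point: some point is a start point of both. -/
def SharesStart (n : ℕ) (A B : Set (ZMod n)) : Prop :=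
  ∃ a, a ∈ A ∧ a - 1 ∉ A ∧ a ∈ B ∧ a - 1 ∉ B

/-- Arcs `A` and `B` share their end point: some point is an end point of both. -/
def SharesEnd (n : ℕ) (A B : Set (ZMod n)) : Prop :=
  ∃ a, a ∈ A ∧ a + 1 ∉ A ∧ a ∈ B ∧ a + 1 ∉ B

/-- `G` is a proper interval graph: it has an intersection model consisting of
nonempty integer intervals that are pairwise incomparable under inclusion. -/
def IsProperIntervalGraph {V : Type*} (G : SimpleGraph V) : Prop :=
  ∃ l : V → Set ℤ,
    (∀ v, ∃ a b : ℤ, a ≤ b ∧ l v = Set.Icc a b) ∧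
    (∀ u v, u ≠ v → ¬ l u ⊆ l v) ∧
    (∀ u v, u ≠ v → (G.Adj u v ↔ (l u ∩ l v).Nonempty))

/-- `G` is a circular-arc graph: it has an intersection model consisting of
nonempty arcs of some circle `ZMod n`. -/
def IsCAGraph {V : Type*} (G : SimpleGraph V) : Prop :=
  ∃ n : ℕ, 0 < n ∧ ∃ l : V → Set (ZMod n),
    Function.Injective l ∧
    (∀ v, (l v).Nonempty ∧ IsArc n (l v)) ∧
    (∀ u v, u ≠ v → (G.Adj u v ↔ (l u ∩ l v).Nonempty))

/-- `G` is a proper circular-arc graph: it has an intersection model consisting of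
nonempty arcs of some circle `ZMod n`, pairwise incomparable under inclusion. -/
def IsPCAGraph {V : Type*} (G : SimpleGraph V) : Prop :=
  ∃ n : ℕ, 0 < n ∧ ∃ l : V → Set (ZMod n),
    Function.Injective l ∧
    (∀ v, (l v).Nonempty ∧ IsArc n (l v)) ∧
    (∀ u v, u ≠ v → ¬ l u ⊆ l v) ∧
    (∀ u v, u ≠ v → (G.Adj u v ↔ (l u ∩ l v).Nonempty))

/-- `G` is bipartite: the vertex set splits into two independent sets. -/
def IsBipartite {V : Type*} (G : SimpleGraph V) : Prop :=
  ∃ U : Set V, (∀ u ∈ U, ∀ v ∈ U, ¬ G.Adj u v) ∧ (∀ u ∉ U, ∀ v ∉ U, ¬ G.Adj u v)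

universe u

lemma isIntervalHypergraph_iff_exists_linearOrder {α ι : Type*} {H : ι → Set α} :
    IsIntervalHypergraph H ↔ ∃ _ : LinearOrder α, ∀ i, (H i).OrdConnected := by
  constructor
  · rintro ⟨r, hr, hH⟩
    let order : LinearOrder α :=
      { le := r
        le_refl := hr.refl
        le_trans := hr.trans
        le_antisymm := hr.antisymm
        le_total := hr.total
        toDecidableLE := Classical.decRel r }
    exact ⟨order, fun i => ⟨fun x hx z hz y hy => hH i x y z hy.1 hy.2 hx hz⟩⟩
  · rintro ⟨_, hH⟩
    exact ⟨(· ≤ ·), inferInstance, fun i _ _ _ hxy hyz hx hz => (hH i).out hx hz ⟨hxy, hyz⟩⟩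

lemma exists_strictMonoOn_int_of_finite {α : Type*} [Preorder α] {s : Set α} (hs : s.Finite) :
    ∃ f : α → ℤ, StrictMonoOn f s := by
  refine ⟨fun x => (s ∩ Iio x).ncard, fun x hx y _ hxy => ?_⟩
  have hssubset : s ∩ Iio x ⊂ s ∩ Iio y :=
    ⟨inter_subset_inter_right s (Iio_subset_Iio hxy.le), fun h => lt_irrefl x (h ⟨hx, hxy⟩).2⟩
  exact Nat.cast_lt.2 (ncard_lt_ncard hssubset (hs.inter_of_left _))

lemma nonempty_Icc_inter_Icc_iff {α : Type*} [Lattice α] {a b c d : α} (hab : a ≤ b)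
    (hcd : c ≤ d) : (Icc a b ∩ Icc c d).Nonempty ↔ a ≤ d ∧ c ≤ b := by
  rw [Icc_inter_Icc, nonempty_Icc, sup_le_iff, le_inf_iff, le_inf_iff, and_iff_right hab,
    and_iff_left hcd]

section ClosedNbhd

variable {V : Type*} {G : SimpleGraph V} {u v : V}

lemma mem_closedNbhd_self : v ∈ ClosedNbhd G v := Or.inl rfl

lemma mem_closedNbhd_comm : u ∈ ClosedNbhd G v ↔ v ∈ ClosedNbhd G u :=
  or_congr eq_comm (G.adj_comm u v)

lemma mem_closedNbhd_iff_adj (huv : u ≠ v) : u ∈ ClosedNbhd G v ↔ G.Adj u v :=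
  or_iff_right huv

end ClosedNbhd

/-- The intervals `[a v, b v]` of the order `α` form a proper interval model of `G`: they are
nonempty, pairwise incomparable under inclusion, and meet exactly at adjacent vertices. This is the
model of `IsProperIntervalGraph` with `α` in place of `ℤ`, given by its endpoints. -/
structure IsProperIntervalModel {V α : Type*} [Preorder α] (G : SimpleGraph V) (a b : V → α) :
    Prop where
  le : ∀ v, a v ≤ b v
  not_subset : ∀ u v, u ≠ v → ¬ Icc (a u) (b u) ⊆ Icc (a v) (b v)
  adj_iff : ∀ u v, u ≠ v → (G.Adj u v ↔ (Icc (a u) (b u) ∩ Icc (a v) (b v)).Nonempty)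

lemma isProperIntervalGraph_iff_exists_int_model {V : Type*} {G : SimpleGraph V} :
    IsProperIntervalGraph G ↔ ∃ a b : V → ℤ, IsProperIntervalModel G a b := by
  constructor
  · rintro ⟨l, hl, hsub, hadj⟩
    choose a b hab hl using hl
    obtain rfl : l = fun v => Icc (a v) (b v) := funext hl
    exact ⟨a, b, hab, hsub, hadj⟩
  · rintro ⟨a, b, h⟩
    exact ⟨fun v => Icc (a v) (b v), fun v => ⟨a v, b v, h.le v, rfl⟩, h.not_subset, h.adj_iff⟩

namespace IsProperIntervalModel

variable {V α : Type*} {G : SimpleGraph V} {a b : V → α} {u v : V}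

lemma eq_of_le_of_le [Preorder α] (h : IsProperIntervalModel G a b) (ha : a v ≤ a u)
    (hb : b u ≤ b v) : u = v :=
  by_contra fun huv => h.not_subset u v huv (Icc_subset_Icc ha hb)

section Lattice

variable [Lattice α]

lemma mem_closedNbhd_iff (h : IsProperIntervalModel G a b) :
    u ∈ ClosedNbhd G v ↔ a u ≤ b v ∧ a v ≤ b u := by
  rcases eq_or_ne u v with rfl | huv
  · simp only [mem_closedNbhd_self, h.le u, and_self]
  · rw [mem_closedNbhd_iff_adj huv, h.adj_iff u v huv,
      nonempty_Icc_inter_Icc_iff (h.le u) (h.le v)]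

lemma of_mem_closedNbhd_iff (hmem : ∀ u v, u ∈ ClosedNbhd G v ↔ a u ≤ b v ∧ a v ≤ b u)
    (heq : ∀ u v, a v ≤ a u → b u ≤ b v → u = v) : IsProperIntervalModel G a b where
  le v := ((hmem v v).1 mem_closedNbhd_self).1
  not_subset u v huv hsub := by
    have hle : a u ≤ b u := ((hmem u u).1 mem_closedNbhd_self).1
    obtain ⟨ha, hb⟩ := (Icc_subset_Icc_iff hle).1 hsub
    exact huv (heq u v ha hb)
  adj_iff u v huv := by
    have hle w : a w ≤ b w := ((hmem w w).1 mem_closedNbhd_self).1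
    rw [← mem_closedNbhd_iff_adj huv, hmem,
      nonempty_Icc_inter_Icc_iff (hle u) (hle v)]

end Lattice

variable [LinearOrder α]

lemma map {β : Type*} [Lattice β] {f : α → β} (h : IsProperIntervalModel G a b)
    (hf : StrictMonoOn f (range a ∪ range b)) : IsProperIntervalModel G (f ∘ a) (f ∘ b) := by
  have ha v : a v ∈ range a ∪ range b := Or.inl ⟨v, rfl⟩
  have hb v : b v ∈ range a ∪ range b := Or.inr ⟨v, rfl⟩
  refine of_mem_closedNbhd_iff (fun u v => ?_) (fun u v hvu huv => ?_)
  · simp only [Function.comp_apply, hf.le_iff_le (ha _) (hb _), h.mem_closedNbhd_iff]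
  · exact h.eq_of_le_of_le ((hf.le_iff_le (ha v) (ha u)).1 hvu) ((hf.le_iff_le (hb u) (hb v)).1 huv)

lemma right_le_right (h : IsProperIntervalModel G a b) (huv : a u ≤ a v) : b u ≤ b v :=
  (le_total (b u) (b v)).elim id fun hvu => (congrArg b (h.eq_of_le_of_le huv hvu)).ge

lemma left_injective (h : IsProperIntervalModel G a b) : Function.Injective a :=
  fun _ _ huv => h.eq_of_le_of_le huv.ge (h.right_le_right huv.le)

lemma isIntervalHypergraph (h : IsProperIntervalModel G a b) :
    IsIntervalHypergraph (ClosedNbhd G) := by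
  rw [isIntervalHypergraph_iff_exists_linearOrder]
  let order : LinearOrder V := LinearOrder.lift' a h.left_injective
  refine ⟨order, fun v => ⟨fun x hx z hz y hy => ?_⟩⟩
  have hxy : a x ≤ a y := hy.1
  have hyz : a y ≤ a z := hy.2
  rw [h.mem_closedNbhd_iff] at hx hz ⊢
  exact ⟨hyz.trans hz.1, hx.2.trans (h.right_le_right hxy)⟩

end IsProperIntervalModel

lemma isProperIntervalGraph_iff_exists_model {V : Type*} [Finite V] {G : SimpleGraph V} :
    IsProperIntervalGraph G ↔
      ∃ (α : Type u) (_ : LinearOrder α) (a b : V → α), IsProperIntervalModel G a b := by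
  rw [isProperIntervalGraph_iff_exists_int_model]
  constructor
  · rintro ⟨a, b, h⟩
    have hup : StrictMono (ULift.up : ℤ → ULift.{u} ℤ) := fun _ _ => id
    exact ⟨ULift ℤ, inferInstance, _, _, h.map (hup.strictMonoOn _)⟩
  · rintro ⟨α, _, a, b, h⟩
    obtain ⟨f, hf⟩ :=
      exists_strictMonoOn_int_of_finite ((finite_range a).union (finite_range b))
    exact ⟨f ∘ a, f ∘ b, h.map hf⟩

section OrdConnected

variable {V : Type*} {G : SimpleGraph V} {u v : V}

section Preorder

variable [Preorder V]

lemma mem_lowerClosure_closedNbhd_of_le (huv : u ≤ v) : u ∈ lowerClosure (ClosedNbhd G v) :=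
  ⟨v, mem_closedNbhd_self, huv⟩

lemma mem_lowerClosure_closedNbhd_iff_of_le (hG : (ClosedNbhd G u).OrdConnected) (huv : u ≤ v) :
    v ∈ lowerClosure (ClosedNbhd G u) ↔ v ∈ ClosedNbhd G u :=
  ⟨fun ⟨_, hx, hvx⟩ => hG.out mem_closedNbhd_self hx ⟨huv, hvx⟩, fun hv => subset_lowerClosure hv⟩

end Preorder

variable [LinearOrder V]

lemma monotone_lowerClosure_closedNbhd (hG : ∀ v, (ClosedNbhd G v).OrdConnected) :
    Monotone fun v => lowerClosure (ClosedNbhd G v) := by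
  refine fun u v huv => lowerClosure_le.2 fun x hx => ?_
  rcases le_total x v with hxv | hvx
  · exact mem_lowerClosure_closedNbhd_of_le hxv
  · have hv : v ∈ ClosedNbhd G x :=
      (hG x).out (mem_closedNbhd_comm.1 hx) mem_closedNbhd_self ⟨huv, hvx⟩
    exact subset_lowerClosure (mem_closedNbhd_comm.1 hv)

lemma mem_closedNbhd_iff_mem_lowerClosure (hG : ∀ v, (ClosedNbhd G v).OrdConnected) :
    u ∈ ClosedNbhd G v ↔ u ∈ lowerClosure (ClosedNbhd G v) ∧ v ∈ lowerClosure (ClosedNbhd G u) := by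
  rcases le_total u v with huv | hvu
  · rw [mem_closedNbhd_comm, mem_lowerClosure_closedNbhd_iff_of_le (hG u) huv,
      and_iff_right (mem_lowerClosure_closedNbhd_of_le huv)]
  · rw [mem_lowerClosure_closedNbhd_iff_of_le (hG v) hvu,
      and_iff_left (mem_lowerClosure_closedNbhd_of_le hvu)]

/-- The left endpoint `(↓v, ⊥)` of the interval that represents `v` in the model built from a linear
order on the vertices. The second component, which breaks ties, puts the left endpoint `↓v` before
every right endpoint with the same first component. -/
def leftEndpoint (v : V) : LowerSet V ×ₗ WithBot V :=
  toLex (LowerSet.Iic v, ⊥)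

/-- The right endpoint `(↓N[v], v)` of the interval that represents `v` in the model built from a
linear order on the vertices. The second component separates vertices with the same `↓N[v]`. -/
def rightEndpoint (G : SimpleGraph V) (v : V) : LowerSet V ×ₗ WithBot V :=
  toLex (lowerClosure (ClosedNbhd G v), (v : WithBot V))

lemma leftEndpoint_le_leftEndpoint_iff : leftEndpoint u ≤ leftEndpoint v ↔ u ≤ v := by
  simp only [leftEndpoint, Prod.Lex.toLex_le_toLex', LowerSet.Iic_le, LowerSet.mem_Iic_iff, le_rfl,
    implies_true, and_true]

lemma leftEndpoint_le_rightEndpoint_iff :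
    leftEndpoint u ≤ rightEndpoint G v ↔ u ∈ lowerClosure (ClosedNbhd G v) := by
  simp only [leftEndpoint, rightEndpoint, Prod.Lex.toLex_le_toLex', LowerSet.Iic_le, bot_le,
    implies_true, and_true]

lemma strictMono_rightEndpoint (hG : ∀ v, (ClosedNbhd G v).OrdConnected) :
    StrictMono (rightEndpoint G) := fun _ _ huv =>
  Prod.Lex.toLex_lt_toLex'.2
    ⟨monotone_lowerClosure_closedNbhd hG huv.le, fun _ => WithBot.coe_lt_coe.2 huv⟩

lemma isProperIntervalModel_leftEndpoint_rightEndpoint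
    (hG : ∀ v, (ClosedNbhd G v).OrdConnected) :
    IsProperIntervalModel G leftEndpoint (rightEndpoint G) := by
  refine .of_mem_closedNbhd_iff (fun u v => ?_) (fun u v hvu huv => ?_)
  · simp only [leftEndpoint_le_rightEndpoint_iff, mem_closedNbhd_iff_mem_lowerClosure hG]
  · exact le_antisymm ((strictMono_rightEndpoint hG).le_iff_le.1 huv)
      (leftEndpoint_le_leftEndpoint_iff.1 hvu)

end OrdConnected

theorem stmt0_general {V : Type u} (G : SimpleGraph V) :
    (∃ (α : Type u) (_ : LinearOrder α) (a b : V → α), IsProperIntervalModel G a b) ↔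
      IsIntervalHypergraph (ClosedNbhd G) := by
  constructor
  · rintro ⟨α, _, a, b, h⟩
    exact h.isIntervalHypergraph
  · intro h
    obtain ⟨_, hG⟩ := isIntervalHypergraph_iff_exists_linearOrder.1 h
    exact ⟨_, _, _, _, isProperIntervalModel_leftEndpoint_rightEndpoint hG⟩

/-- Roberts. A finite simple graph `G` is a proper interval graph
iff its closed neighborhood hypergraph `N[G]` is an interval hypergraph. -/
theorem stmt0 {V : Type*} [Fintype V] (G : SimpleGraph V) :
    IsProperIntervalGraph G ↔ IsIntervalHypergraph (fun v => ClosedNbhd G v) :=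
  isProperIntervalGraph_iff_exists_model.trans (stmt0_general G)
end

section
/- If the closed neighborhood hypergraph N[G] of a finite simple graph G is a circular-arc hypergraph (i.e., G is concave-round), then G is a circular-arc graph. -/
open Set

/-!
Place the vertices on the circle and give each vertex `u` the longest clockwise arc that starts at
`u` and runs inside `N[u]`. Two arcs meet iff one of them contains the start of the other, so this
is an intersection model unless some adjacent pair `u, v` has a non-neighbor of `u` clockwise
between `u` and `v` and a non-neighbor of `v` clockwise between `v` and `u`.

Given such a pair, cut the circle at `u`. In the resulting linear order every non-neighborhood is an
interval or the complement of one. A vertex before `v` is adjacent to `v`, and a vertex after `v` is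
adjacent to `u`; so the non-neighbors of each vertex either all precede it or all follow it, in the
linear order obtained by cutting the circle at `v` resp. at `u`. These directions 2-color the
complement of `G`. The color class of `u` has non-neighborhoods avoiding `u`, hence intervals: the
complement of `G` is a convex bipartite graph, and the complements of those have explicit
circular-arc models.
-/

section ClockwiseDist

variable {n : ℕ}

/-- The number of unit steps that lead clockwise from `x` to `y` on the circle `ZMod n`. For `n = 0`
this is the junk value `|y - x|`. -/
def clockwiseDist (x y : ZMod n) : ℕ := (y - x).val

@[simp]
lemma clockwiseDist_self (x : ZMod n) : clockwiseDist x x = 0 := by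
  simp [clockwiseDist]

lemma clockwiseDist_add_natCast (x : ZMod n) {i : ℕ} (hi : i < n) :
    clockwiseDist x (x + i) = i := by
  rw [clockwiseDist, add_sub_cancel_left, ZMod.val_cast_of_lt hi]

variable [NeZero n]

lemma clockwiseDist_lt (x y : ZMod n) : clockwiseDist x y < n :=
  ZMod.val_lt _

lemma clockwiseDist_right_injective (x : ZMod n) : Function.Injective (clockwiseDist x) :=
  (ZMod.val_injective n).comp (sub_left_injective (b := x))

lemma add_clockwiseDist (x y : ZMod n) : x + (clockwiseDist x y : ZMod n) = y := by
  simp [clockwiseDist]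

lemma clockwiseDist_intCast (i j : ℤ) :
    (clockwiseDist (i : ZMod n) (j : ZMod n) : ℤ) = (j - i) % n := by
  rw [clockwiseDist, ← Int.cast_sub, ZMod.val_intCast]

lemma clockwiseDist_intCast_eq_ite {i j : ℤ} (hij : |j - i| < n) :
    (clockwiseDist (i : ZMod n) (j : ZMod n) : ℤ) = if i ≤ j then j - i else j - i + n := by
  rw [abs_lt] at hij
  rw [clockwiseDist_intCast]
  split_ifs with h
  · exact Int.emod_eq_of_lt (by omega) (by omega)
  · rw [← Int.add_emod_right, Int.emod_eq_of_lt (by omega) (by omega)]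

lemma clockwiseDist_intCast_le {i j : ℤ} (hij : i ≤ j) :
    (clockwiseDist (i : ZMod n) (j : ZMod n) : ℤ) ≤ j - i := by
  lift j - i to ℕ using sub_nonneg.2 hij with d hd
  rw [clockwiseDist_intCast, ← hd]
  exact_mod_cast Nat.mod_le d n

lemma clockwiseDist_le_or_of_mem_Icc {i j c : ℤ} {k l : ℕ} (hi : c ∈ Set.Icc i (i + k))
    (hj : c ∈ Set.Icc j (j + l)) :
    clockwiseDist (i : ZMod n) (j : ZMod n) ≤ k ∨ clockwiseDist (j : ZMod n) (i : ZMod n) ≤ l := by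
  obtain ⟨⟨hic, hci⟩, hjc, hcj⟩ := And.intro hi hj
  rcases le_total i j with hij | hij
  · have := clockwiseDist_intCast_le (n := n) hij
    omega
  · have := clockwiseDist_intCast_le (n := n) hij
    omega

lemma clockwiseDist_val_mul (x y : ZMod n) (m : ℕ) [NeZero m] :
    clockwiseDist ((x.val * m : ℤ) : ZMod (n * m)) ((y.val * m : ℤ) : ZMod (n * m)) =
      clockwiseDist x y * m := by
  have hxy := clockwiseDist_intCast (n := n) x.val y.val
  simp only [Int.cast_natCast, ZMod.natCast_zmod_val] at hxy
  have hm : (0 : ℤ) < m := by exact_mod_cast NeZero.pos m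
  rw [← Nat.cast_inj (R := ℤ), Nat.cast_mul, clockwiseDist_intCast, hxy, ← sub_mul, Nat.cast_mul,
    mul_comm _ (m : ℤ), mul_comm _ (m : ℤ), Int.mul_emod_mul_of_pos _ _ hm, mul_comm]

lemma clockwiseDist_add_swap {x y : ZMod n} (hxy : x ≠ y) :
    clockwiseDist x y + clockwiseDist y x = n := by
  have : NeZero (y - x) := ⟨sub_ne_zero.2 hxy.symm⟩
  have hlt := clockwiseDist_lt x y
  rw [clockwiseDist] at hlt
  rw [clockwiseDist, clockwiseDist, ← neg_sub y x, ZMod.val_neg_of_ne_zero]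
  omega

lemma clockwiseDist_le_of_lt {x y z : ZMod n} (h : clockwiseDist x z < clockwiseDist x y) :
    clockwiseDist y x ≤ clockwiseDist y z := by
  have hxy : x ≠ y := by
    rintro rfl
    simp at h
  have hlt : (x - y).val + (z - x).val < n := by
    have := clockwiseDist_add_swap hxy
    unfold clockwiseDist at *
    omega
  have hsum := ZMod.val_add_of_lt hlt
  rw [sub_add_sub_cancel'] at hsum
  exact (Nat.le_add_right _ _).trans_eq hsum.symm

end ClockwiseDist

section Arc

variable {n : ℕ}

/-- The arc that runs `k` steps clockwise from `a`. It has `k + 1` points, so it is never empty. -/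
def arc (a : ZMod n) (k : ℕ) : Set (ZMod n) := {x | clockwiseDist a x ≤ k}

variable [NeZero n]

lemma arc_eq_image (a : ZMod n) {k : ℕ} (hk : k < n) :
    arc a k = (fun i : ℕ => a + (i : ZMod n)) '' Set.Iic k := by
  ext x
  constructor
  · exact fun hx => ⟨clockwiseDist a x, hx, add_clockwiseDist a x⟩
  · rintro ⟨i, hi, rfl⟩
    exact (clockwiseDist_add_natCast a (lt_of_le_of_lt hi hk)).trans_le hi

lemma isArc_arc (a : ZMod n) {k : ℕ} (hk : k < n) : IsArc n (arc a k) := by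
  refine ⟨a, k + 1, hk, ?_⟩
  rw [arc_eq_image a hk]
  ext x
  simp [eq_comm]

lemma ncard_arc (a : ZMod n) {k : ℕ} (hk : k < n) : (arc a k).ncard = k + 1 := by
  have hinj : Set.InjOn (fun i : ℕ => a + (i : ZMod n)) (Set.Iic k) := by
    intro i hi j hj hij
    have hdist := congrArg (clockwiseDist a) hij
    rwa [clockwiseDist_add_natCast a (lt_of_le_of_lt hi hk),
      clockwiseDist_add_natCast a (lt_of_le_of_lt hj hk)] at hdist
  rw [arc_eq_image a hk, hinj.ncard_image, Set.ncard_eq_toFinset_card']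
  simp

lemma arc_inter_arc_nonempty_iff (a b : ZMod n) (k l : ℕ) :
    (arc a k ∩ arc b l).Nonempty ↔ clockwiseDist a b ≤ k ∨ clockwiseDist b a ≤ l := by
  constructor
  · rintro ⟨x, hax : clockwiseDist a x ≤ k, hbx : clockwiseDist b x ≤ l⟩
    rcases le_or_gt (clockwiseDist a b) (clockwiseDist a x) with h | h
    · exact Or.inl (h.trans hax)
    · exact Or.inr ((clockwiseDist_le_of_lt h).trans hbx)
  · rintro (h | h)
    · exact ⟨b, h, by simp [arc]⟩
    · exact ⟨a, by simp [arc], h⟩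

lemma isCAGraph_of_arc_injective {V : Type*} {G : SimpleGraph V} (a : V → ZMod n) (k : V → ℕ)
    (hk : ∀ v, k v < n) (hinj : Function.Injective fun v => arc (a v) (k v))
    (hadj : ∀ u v, u ≠ v →
      (G.Adj u v ↔ clockwiseDist (a u) (a v) ≤ k u ∨ clockwiseDist (a v) (a u) ≤ k v)) :
    IsCAGraph G :=
  ⟨n, NeZero.pos n, fun v => arc (a v) (k v), hinj,
    fun v => ⟨⟨a v, by simp [arc]⟩, isArc_arc _ (hk v)⟩,
    fun u v huv => (hadj u v huv).trans (arc_inter_arc_nonempty_iff _ _ _ _).symm⟩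

/-- Every point of the circle is replaced by a block of `|V| + 1` points; starts stay at the
beginning of their blocks, and each end is moved within its block so that the arcs get different
sizes. -/
lemma isCAGraph_of_arc {V : Type*} [Finite V] {G : SimpleGraph V} (a : V → ZMod n) (k : V → ℕ)
    (hk : ∀ v, k v < n)
    (hadj : ∀ u v, u ≠ v →
      (G.Adj u v ↔ clockwiseDist (a u) (a v) ≤ k u ∨ clockwiseDist (a v) (a u) ≤ k v)) :
    IsCAGraph G := by
  obtain ⟨m, ⟨e⟩⟩ := Finite.exists_equiv_fin V
  have he (v : V) : (e v : ℕ) < m + 1 := (e v).isLt.trans (Nat.lt_succ_self m)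
  let start (v : V) : ZMod (n * (m + 1)) := (((a v).val * (m + 1 : ℕ) : ℤ) : ZMod (n * (m + 1)))
  let length (v : V) : ℕ := e v + k v * (m + 1)
  have hlength (v : V) : length v < n * (m + 1) :=
    calc e v + k v * (m + 1) < (k v + 1) * (m + 1) := by rw [add_one_mul]; have := he v; omega
      _ ≤ n * (m + 1) := Nat.mul_le_mul_right _ (hk v)
  have hdist (u v : V) :
      clockwiseDist (start u) (start v) ≤ length u ↔ clockwiseDist (a u) (a v) ≤ k u := by
    have hdiv : length u / (m + 1) = k u := by
      rw [Nat.add_mul_div_right _ _ m.succ_pos, Nat.div_eq_of_lt (he u), zero_add]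
    rw [clockwiseDist_val_mul, ← Nat.le_div_iff_mul_le m.succ_pos, hdiv]
  refine isCAGraph_of_arc_injective start length hlength (fun u v huv => ?_) fun u v huv => ?_
  · have hcard := congrArg Set.ncard huv
    simp only [ncard_arc _ (hlength _), Nat.add_right_cancel_iff] at hcard
    have hmod := congrArg (· % (m + 1)) hcard
    simp only [length, Nat.add_mul_mod_self_right, Nat.mod_eq_of_lt (he _)] at hmod
    exact e.injective (Fin.ext hmod)
  · rw [hdist, hdist, hadj u v huv]

end Arc

section ClockwiseRun

variable {V : Type*} {n : ℕ} {G : SimpleGraph V} {f : V → ZMod n} {u v : V}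

/-- When the vertices sit on a circle by `f`, the clockwise run of `u` is the longest stretch of
vertices that starts at `u` and stays in the closed neighborhood of `u`. -/
def clockwiseRun (G : SimpleGraph V) (f : V → ZMod n) (u : V) : Set V :=
  {v | ∀ w, clockwiseDist (f u) (f w) ≤ clockwiseDist (f u) (f v) → w ∈ ClosedNbhd G u}

lemma adj_of_mem_clockwiseRun (huv : u ≠ v) (hv : v ∈ clockwiseRun G f u) : G.Adj u v :=
  ((hv v le_rfl).resolve_left huv.symm).symm

variable [NeZero n]

lemma self_mem_clockwiseRun (hf : Function.Injective f) (u : V) : u ∈ clockwiseRun G f u := by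
  intro w hw
  rw [clockwiseDist_self, Nat.le_zero, ← clockwiseDist_self (f u)] at hw
  exact Or.inl (hf (clockwiseDist_right_injective _ hw))

lemma exists_mem_clockwiseRun_iff [Finite V] (hf : Function.Injective f) (u : V) :
    ∃ k < n, ∀ v, v ∈ clockwiseRun G f u ↔ clockwiseDist (f u) (f v) ≤ k := by
  obtain ⟨w, hw, hmax⟩ := Set.exists_max_image (clockwiseRun G f u)
    (fun v => clockwiseDist (f u) (f v)) (Set.toFinite _) ⟨u, self_mem_clockwiseRun hf u⟩
  exact ⟨clockwiseDist (f u) (f w), clockwiseDist_lt _ _,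
    fun v => ⟨hmax v, fun hv x hx => hw x (hx.trans hv)⟩⟩

lemma isCAGraph_of_mem_clockwiseRun [Finite V] (hf : Function.Injective f)
    (h : ∀ u v, G.Adj u v → v ∈ clockwiseRun G f u ∨ u ∈ clockwiseRun G f v) : IsCAGraph G := by
  choose k hk hrun using exists_mem_clockwiseRun_iff (G := G) hf
  refine isCAGraph_of_arc f k hk fun u v huv => ?_
  rw [← hrun, ← hrun]
  refine ⟨h u v, ?_⟩
  rintro (hv | hu)
  · exact adj_of_mem_clockwiseRun huv hv
  · exact (adj_of_mem_clockwiseRun huv.symm hu).symm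

end ClockwiseRun

section CircularlyConvex

variable {α : Type*} [LinearOrder α] {S : Set α}

/-- A subset of a linear order is circularly convex if it becomes an arc when the order is closed
up to a circle, that is, if the set or its complement is order-convex. -/
def IsCircularlyConvex (S : Set α) : Prop := S.OrdConnected ∨ Sᶜ.OrdConnected

lemma IsCircularlyConvex.compl (hS : IsCircularlyConvex S) : IsCircularlyConvex Sᶜ := by
  rw [IsCircularlyConvex, compl_compl]
  exact hS.symm

lemma IsCircularlyConvex.mem_of_alternating (hS : IsCircularlyConvex S) {a b c d : α}
    (hab : a ≤ b) (hbc : b ≤ c) (hcd : c ≤ d) (ha : a ∈ S) (hb : b ∉ S) (hc : c ∈ S) : d ∈ S := by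
  rcases hS with hS | hS
  · exact absurd (hS.out ha hc ⟨hab, hbc⟩) hb
  · by_contra hd
    exact hS.out hb hd ⟨hbc, hcd⟩ hc

lemma IsCircularlyConvex.notMem_of_alternating (hS : IsCircularlyConvex S) {a b c d : α}
    (hab : a ≤ b) (hbc : b ≤ c) (hcd : c ≤ d) (ha : a ∉ S) (hb : b ∈ S) (hc : c ∉ S) : d ∉ S :=
  hS.compl.mem_of_alternating hab hbc hcd ha (not_not.2 hb) hc

lemma IsCircularlyConvex.ordConnected_of_isBot_notMem (hS : IsCircularlyConvex S) {a : α}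
    (ha : IsBot a) (haS : a ∉ S) : S.OrdConnected := by
  refine ⟨fun x hx z hz y hy => ?_⟩
  by_contra hyS
  exact hS.notMem_of_alternating (ha x) hy.1 hy.2 haS hx hyS hz

lemma exists_strictMono_nat_le (α : Type*) [Finite α] [LinearOrder α] :
    ∃ (r : α → ℕ) (n : ℕ), StrictMono r ∧ ∀ x, r x ≤ n := by
  have := Fintype.ofFinite α
  exact ⟨fun x => (monoEquivOfFin α rfl).symm x, Fintype.card α,
    fun _ _ h => (monoEquivOfFin α rfl).symm.strictMono h, fun x => (Fin.isLt _).le⟩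

lemma exists_mem_iff_mem_Ico_of_ordConnected [Finite α] (hS : S.OrdConnected) {r : α → ℕ}
    (hr : StrictMono r) {n : ℕ} (hrn : ∀ x, r x ≤ n) :
    ∃ s t, s ≤ t ∧ t ≤ n + 1 ∧ ∀ x, x ∈ S ↔ r x ∈ Set.Ico s t := by
  rcases S.eq_empty_or_nonempty with rfl | hne
  · exact ⟨0, 0, le_rfl, Nat.zero_le _, by simp⟩
  obtain ⟨a, ha, hmin⟩ := Set.exists_min_image S r S.toFinite hne
  obtain ⟨b, hb, hmax⟩ := Set.exists_max_image S r S.toFinite hne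
  refine ⟨r a, r b + 1, (hmin b hb).trans (Nat.le_succ _), Nat.succ_le_succ (hrn b), fun x => ?_⟩
  refine ⟨fun hx => ⟨hmin x hx, Nat.lt_succ_of_le (hmax x hx)⟩, fun hx => ?_⟩
  exact hS.out ha hb ⟨hr.le_iff_le.1 hx.1, hr.le_iff_le.1 (Nat.le_of_lt_succ hx.2)⟩

end CircularlyConvex

section Cut

variable {n : ℕ} [NeZero n]

lemma exists_mem_iff_clockwiseDist_lt {S : Set (ZMod n)} (hS : IsArc n S) :
    ∃ a k, ∀ x, x ∈ S ↔ clockwiseDist a x < k := by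
  obtain ⟨a, k, hk, rfl⟩ := hS
  refine ⟨a, k, fun x => ⟨?_, fun hx => ⟨_, hx, (add_clockwiseDist a x).symm⟩⟩⟩
  rintro ⟨i, hi, rfl⟩
  rwa [clockwiseDist_add_natCast a (hi.trans_le hk)]

lemma clockwiseDist_eq_ite (a o x : ZMod n) :
    clockwiseDist a x =
      if clockwiseDist a o + clockwiseDist o x < n then clockwiseDist a o + clockwiseDist o x
      else clockwiseDist a o + clockwiseDist o x - n := by
  have hsum : x - a = (o - a) + (x - o) := (sub_add_sub_cancel' o a x).symm
  unfold clockwiseDist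
  split_ifs with h
  · rw [hsum, ZMod.val_add_of_lt h]
  · rw [hsum, ZMod.val_add_val_of_le (not_lt.1 h), Nat.add_sub_cancel]

lemma exists_mem_iff_clockwiseDist_mem_Ico {S : Set (ZMod n)} (hS : IsArc n S) (o : ZMod n) :
    ∃ i j, (∀ x, x ∈ S ↔ clockwiseDist o x ∈ Set.Ico i j) ∨
      ∀ x, x ∉ S ↔ clockwiseDist o x ∈ Set.Ico i j := by
  obtain ⟨a, k, hmem⟩ := exists_mem_iff_clockwiseDist_lt hS
  have ho := clockwiseDist_lt a o
  rcases le_or_gt k (clockwiseDist a o) with hoS | hoS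
  · refine ⟨n - clockwiseDist a o, n - clockwiseDist a o + k, Or.inl fun x => ?_⟩
    rw [hmem, clockwiseDist_eq_ite a o x, Set.mem_Ico]
    split_ifs <;> omega
  · refine ⟨k - clockwiseDist a o, n - clockwiseDist a o, Or.inr fun x => ?_⟩
    have hx := clockwiseDist_lt o x
    rw [hmem, clockwiseDist_eq_ite a o x, Set.mem_Ico]
    split_ifs <;> omega

variable {V : Type*} {f : V → ZMod n}

/-- The linear order in which the vertices, placed on the circle by `f`, are met on a clockwise
round trip from `o`. -/
abbrev cutOrder (hf : Function.Injective f) (o : ZMod n) : LinearOrder V :=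
  LinearOrder.lift' (fun v => clockwiseDist o (f v)) ((clockwiseDist_right_injective o).comp hf)

lemma isCircularlyConvex_cutOrder (hf : Function.Injective f) (o : ZMod n) {S : Set V}
    (hS : IsArc n (f '' S)) : @IsCircularlyConvex V (cutOrder hf o) S := by
  let _ := cutOrder hf o
  have hIco (i j : ℕ) : {v | clockwiseDist o (f v) ∈ Set.Ico i j}.OrdConnected :=
    Set.ordConnected_Ico.preimage_mono (f := fun v => clockwiseDist o (f v)) fun _ _ h => h
  obtain ⟨i, j, h | h⟩ := exists_mem_iff_clockwiseDist_mem_Ico hS o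
  · have hS_eq : S = {v | clockwiseDist o (f v) ∈ Set.Ico i j} :=
      Set.ext fun v => hf.mem_set_image.symm.trans (h (f v))
    exact Or.inl (hS_eq ▸ hIco i j)
  · have hS_eq : Sᶜ = {v | clockwiseDist o (f v) ∈ Set.Ico i j} :=
      Set.ext fun v => (not_congr hf.mem_set_image).symm.trans (h (f v))
    exact Or.inr (hS_eq ▸ hIco i j)

end Cut

section ConvexBipartite

lemma adj_of_isBipartiteWith_compl {V : Type*} {G : SimpleGraph V} {B : Set V} {u v : V}
    (hB : Gᶜ.IsBipartiteWith B Bᶜ) (huv : u ≠ v) (hside : u ∈ B ↔ v ∈ B) : G.Adj u v := by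
  by_contra hadj
  have hsides := hB.mem_of_adj ((SimpleGraph.compl_adj G u v).2 ⟨huv, hadj⟩)
  simp only [Set.mem_compl_iff] at hsides
  tauto

/-- The two sides are the intersection conditions between the arc `[n + 1 - s, 2n + 2 - t]` and the
half circle `[-r, n - r]`, whose complement is `[n + 1 - r, 2n + 1 - r]`. -/
lemma clockwiseDist_le_or_iff_notMem_Ico {n r s t : ℕ} (hr : r ≤ n) (hst : s ≤ t)
    (ht : t ≤ n + 1) :
    (clockwiseDist ((n + 1 - s : ℤ) : ZMod (2 * (n + 1))) ((-r : ℤ) : ZMod (2 * (n + 1)))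
        ≤ n + 1 + s - t ∨
      clockwiseDist ((-r : ℤ) : ZMod (2 * (n + 1))) ((n + 1 - s : ℤ) : ZMod (2 * (n + 1))) ≤ n) ↔
      r ∉ Set.Ico s t := by
  have h := clockwiseDist_intCast_eq_ite (n := 2 * (n + 1)) (i := n + 1 - s) (j := -r)
    (by rw [abs_lt]; omega)
  have h' := clockwiseDist_intCast_eq_ite (n := 2 * (n + 1)) (i := -r) (j := n + 1 - s)
    (by rw [abs_lt]; omega)
  rw [Set.mem_Ico]
  split_ifs at h h' <;> omega

/-- With the vertices ranked by `r ≤ n`, those outside `B` get the half circle `[-r, n - r]` of a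
circle of length `2n + 2`, and those in `B` with non-neighbors of ranks `s, …, t - 1` get
`[n + 1 - s, 2n + 2 - t]`. All half circles contain `0`, and all other arcs contain `n + 1`. -/
lemma isCAGraph_of_isBipartiteWith_compl {V : Type*} [LinearOrder V] [Finite V] {G : SimpleGraph V}
    {B : Set V} (hB : Gᶜ.IsBipartiteWith B Bᶜ)
    (hconv : ∀ b ∈ B, (Gᶜ.neighborSet b).OrdConnected) : IsCAGraph G := by
  classical
  obtain ⟨r, n, hr, hrn⟩ := exists_strictMono_nat_le V
  choose! s t hst htn hmem using fun b hb =>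
    exists_mem_iff_mem_Ico_of_ordConnected (hconv b hb) hr hrn
  have hmixed {b a : V} (hb : b ∈ B) (ha : a ∉ B) : G.Adj b a ↔ r a ∉ Set.Ico (s b) (t b) := by
    have hba : b ≠ a := ne_of_mem_of_not_mem hb ha
    rw [← hmem b hb, SimpleGraph.mem_neighborSet, SimpleGraph.compl_adj]
    tauto
  let start (v : V) : ℤ := if v ∈ B then n + 1 - s v else -r v
  let length (v : V) : ℕ := if v ∈ B then n + 1 + s v - t v else n
  refine isCAGraph_of_arc (n := 2 * (n + 1)) (fun v => (start v : ZMod (2 * (n + 1)))) length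
    (fun v => ?_) fun u v huv => ?_
  · by_cases hv : v ∈ B
    · have := hst v hv
      simp only [length, if_pos hv]
      omega
    · simp only [length, if_neg hv]
      omega
  have hmeet {c : ℤ} (hu : c ∈ Set.Icc (start u) (start u + length u))
      (hv : c ∈ Set.Icc (start v) (start v + length v)) :=
    clockwiseDist_le_or_of_mem_Icc (n := 2 * (n + 1)) hu hv
  by_cases hu : u ∈ B <;> by_cases hv : v ∈ B
  · have hside : u ∈ B ↔ v ∈ B := iff_of_true hu hv
    refine iff_of_true (adj_of_isBipartiteWith_compl hB huv hside) (hmeet (c := n + 1) ?_ ?_)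
    all_goals simp only [start, length, hu, hv, Set.mem_Icc]; grind
  · simp only [start, length, if_pos hu, if_neg hv]
    rw [hmixed hu hv, clockwiseDist_le_or_iff_notMem_Ico (hrn v) (hst u hu) (htn u hu)]
  · simp only [start, length, if_neg hu, if_pos hv]
    rw [G.adj_comm, hmixed hv hu, or_comm,
      clockwiseDist_le_or_iff_notMem_Ico (hrn u) (hst v hv) (htn v hv)]
  · have hside : u ∈ B ↔ v ∈ B := iff_of_false hu hv
    refine iff_of_true (adj_of_isBipartiteWith_compl hB huv hside) (hmeet (c := 0) ?_ ?_)
    all_goals simp only [start, length, hu, hv, Set.mem_Icc]; grind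

end ConvexBipartite

section Coloring

lemma neighborSet_compl_eq_compl_closedNbhd {V : Type*} (G : SimpleGraph V) (w : V) :
    Gᶜ.neighborSet w = (ClosedNbhd G w)ᶜ := by
  ext z
  simp [ClosedNbhd, G.adj_comm, eq_comm]

variable {V : Type*} [LinearOrder V] {H : SimpleGraph V} {p q u v x y : V}

/-- The color class of the first vertex in the 2-coloring of the complement graph `H`: the vertices
before `v` with a neighbor between themselves and `v`, and those from `v` on with a smaller
neighbor. -/
def colorClass (H : SimpleGraph V) (v : V) : Set V :=
  {p | ∃ q, H.Adj p q ∧ (p < q ∧ q < v ∨ v ≤ p ∧ q < p)}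

lemma mem_colorClass_iff_of_lt (hH : ∀ w, IsCircularlyConvex (H.neighborSet w)) (hu : IsBot u)
    (hafter : ∀ w, v ≤ w → ¬H.Adj w u) (hbefore : ∀ w < v, ¬H.Adj w v) (hpq : p < q)
    (hadj : H.Adj p q) : p ∈ colorClass H v ↔ q ∉ colorClass H v := by
  rcases lt_or_ge q v with hqv | hvq
  · refine iff_of_true ⟨q, hadj, Or.inl ⟨hpq, hqv⟩⟩ ?_
    rintro ⟨w, hqw, ⟨hlt, hwv⟩ | ⟨hvq, -⟩⟩
    · exact hbefore q hqv
        ((hH q).mem_of_alternating hpq.le hlt.le hwv.le hadj.symm (H.irrefl) hqw)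
    · exact hqv.not_ge hvq
  · refine iff_of_false ?_ (not_not.2 ⟨p, hadj.symm, Or.inr ⟨hvq, hpq⟩⟩)
    rintro ⟨w, hpw, ⟨hlt, hwv⟩ | ⟨hvp, hwp⟩⟩
    · exact (hH p).notMem_of_alternating hlt.le hwv.le hvq (H.irrefl) hpw
        (hbefore p (hlt.trans hwv)) hadj
    · exact (hH p).notMem_of_alternating (hu w) hwp.le hpq.le (hafter p hvp) hpw (H.irrefl) hadj

lemma isBipartiteWith_colorClass (hH : ∀ w, IsCircularlyConvex (H.neighborSet w)) (hu : IsBot u)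
    (hafter : ∀ w, v ≤ w → ¬H.Adj w u) (hbefore : ∀ w < v, ¬H.Adj w v) :
    H.IsBipartiteWith (colorClass H v) (colorClass H v)ᶜ := by
  refine ⟨disjoint_compl_right, fun p q hadj => ?_⟩
  simp only [Set.mem_compl_iff]
  rcases hadj.ne.lt_or_gt with hpq | hqp
  · have := mem_colorClass_iff_of_lt hH hu hafter hbefore hpq hadj
    tauto
  · have := mem_colorClass_iff_of_lt hH hu hafter hbefore hqp hadj.symm
    tauto

lemma isCAGraph_of_isCircularlyConvex [Finite V] {G : SimpleGraph V}
    (hG : ∀ w, IsCircularlyConvex (ClosedNbhd G w)) (hu : IsBot u) (huv : G.Adj u v)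
    (hxv : x ≤ v) (hx : x ∉ ClosedNbhd G u) (hvy : v ≤ y) (hy : y ∉ ClosedNbhd G v) :
    IsCAGraph G := by
  have hH (w : V) : IsCircularlyConvex (Gᶜ.neighborSet w) :=
    neighborSet_compl_eq_compl_closedNbhd G w ▸ (hG w).compl
  have hux : Gᶜ.Adj u x := (neighborSet_compl_eq_compl_closedNbhd G u).ge hx
  have hvy' : Gᶜ.Adj v y := (neighborSet_compl_eq_compl_closedNbhd G v).ge hy
  have hnuv : ¬Gᶜ.Adj u v := fun h => h.2 huv
  have hafter (w : V) (hw : v ≤ w) : ¬Gᶜ.Adj w u := fun h =>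
    (hH u).notMem_of_alternating (hu x) hxv hw Gᶜ.irrefl hux hnuv h.symm
  have hbefore (w : V) (hw : w < v) : ¬Gᶜ.Adj w v := fun h =>
    (hH v).notMem_of_alternating (hu w) hw.le hvy (fun h => hnuv h.symm) h.symm Gᶜ.irrefl hvy'
  have hux_lt : u < x := (hu x).lt_of_ne hux.ne
  have hxv_lt : x < v := hxv.lt_of_ne fun h => hnuv (h ▸ hux)
  have hmem_u : u ∈ colorClass Gᶜ v := ⟨x, hux, Or.inl ⟨hux_lt, hxv_lt⟩⟩
  have hbip := isBipartiteWith_colorClass hH hu hafter hbefore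
  refine isCAGraph_of_isBipartiteWith_compl hbip fun b hb => ?_
  refine (hH b).ordConnected_of_isBot_notMem hu fun hbu => ?_
  exact hbip.mem_of_adj hbu |>.elim (fun h => h.2 hmem_u) fun h => h.1 hb

end Coloring

/-- Tucker. If the closed neighborhood hypergraph `N[G]` of a finite
simple graph `G` is a circular-arc hypergraph (i.e. `G` is concave-round), then `G` is
a circular-arc graph. -/
theorem stmt2 {V : Type*} [Fintype V] (G : SimpleGraph V)
    (h : ∃ f : V ≃ ZMod (Fintype.card V),
      ∀ v, IsArc (Fintype.card V) (f '' ClosedNbhd G v)) :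
    IsCAGraph G := by
  obtain ⟨f, hf⟩ := h
  have : Nonempty V := ⟨f.symm 0⟩
  by_cases hrun : ∀ u v, G.Adj u v → v ∈ clockwiseRun G f u ∨ u ∈ clockwiseRun G f v
  · exact isCAGraph_of_mem_clockwiseRun f.injective hrun
  simp only [clockwiseRun, Set.mem_ofPred_eq] at hrun
  push Not at hrun
  obtain ⟨u, v, huv, ⟨x, hxv, hx⟩, y, hyu, hy⟩ := hrun
  have hy_ne : y ≠ u := fun h => hy (h ▸ Or.inr huv)
  have hvy : clockwiseDist (f v) (f y) < clockwiseDist (f v) (f u) :=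
    hyu.lt_of_ne fun h => hy_ne (f.injective (clockwiseDist_right_injective _ h))
  let _ := cutOrder f.injective (f u)
  have hu : IsBot u := fun w => (clockwiseDist_self (f u)).trans_le (Nat.zero_le _)
  exact isCAGraph_of_isCircularlyConvex
    (fun w => isCircularlyConvex_cutOrder f.injective (f u) (hf w)) hu huv hxv hx
    (clockwiseDist_le_of_lt hvy) hy
end

section
/- A finite simple graph G admits a bipartition of its vertex set into two independent sets U and W such that both hypergraphs N_U(G) = (N(w))_{w ∈ W} on vertex set U and N_W(G) = (N(u))_{u ∈ U} on vertex set W are interval hypergraphs (i.e., G is biconvex) if and only if the open neighborhood hypergraph N(G) = (N(v))_{v ∈ V(G)} is an interval hypergraph. -/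
/-!
If both sides of a bipartition carry interval orderings, put one side before the other: each
`N(v)` lies within a single side, and each side is an interval of the concatenation.

Conversely, fix an interval ordering of `N(G)`. As `v ∉ N(v)` and `N(v)` is an interval, the
neighbors of `v` lie all above or all below `v`. So no vertex is both the lower end of one edge and
the upper end of another, and the lower ends form one side of a bipartition. Intervals restrict to
intervals, so both sides inherit an interval ordering.
-/

open Set

theorem IsIntervalWrt.preimage {α β : Type*} {r : α → α → Prop} {S : Set α}
    (hS : IsIntervalWrt r S) (f : β → α) : IsIntervalWrt (Function.onFun r f) (f ⁻¹' S) :=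
  fun x y z => hS (f x) (f y) (f z)

section SumLex

variable {α β : Type*} {r : α → α → Prop} {s : β → β → Prop}

theorem isLinearOrder_sumLex [IsLinearOrder α r] [IsLinearOrder β s] :
    IsLinearOrder (α ⊕ β) (Sum.Lex r s) where

theorem IsIntervalWrt.image_inl {S : Set α} (hS : IsIntervalWrt r S) :
    IsIntervalWrt (Sum.Lex r s) (Sum.inl '' S) := by
  rintro _ y _ hxy hyz ⟨x, hx, rfl⟩ ⟨z, hz, rfl⟩
  cases hyz with
  | inl hyz => exact mem_image_of_mem _ (hS _ _ _ (Sum.lex_inl_inl.1 hxy) hyz hx hz)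

theorem IsIntervalWrt.image_inr {T : Set β} (hT : IsIntervalWrt s T) :
    IsIntervalWrt (Sum.Lex r s) (Sum.inr '' T) := by
  rintro _ y _ hxy hyz ⟨x, hx, rfl⟩ ⟨z, hz, rfl⟩
  cases hxy with
  | inr hxy => exact mem_image_of_mem _ (hT _ _ _ hxy (Sum.lex_inr_inr.1 hyz) hx hz)

end SumLex

namespace IsIntervalHypergraph

variable {α β ι κ : Type*} {H : ι → Set α}

theorem of_range_subset (hH : IsIntervalHypergraph H) {K : κ → Set α} (hKH : range K ⊆ range H) :
    IsIntervalHypergraph K := by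
  obtain ⟨r, hr, hI⟩ := hH
  refine ⟨r, hr, fun j => ?_⟩
  obtain ⟨i, hi⟩ := hKH (mem_range_self j)
  exact hi ▸ hI i

theorem preimage (hH : IsIntervalHypergraph H) {f : β → α} (hf : Function.Injective f) :
    IsIntervalHypergraph (fun i => f ⁻¹' H i) := by
  obtain ⟨r, hr, hI⟩ := hH
  exact ⟨Function.onFun r f, hf.isLinearOrder_onFun r, fun i => (hI i).preimage f⟩

theorem image_equiv (hH : IsIntervalHypergraph H) (e : α ≃ β) :
    IsIntervalHypergraph (fun i => e '' H i) := by
  simpa only [e.image_eq_preimage_symm] using hH.preimage e.symm.injective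

theorem sum (hH : IsIntervalHypergraph H) {K : κ → Set β} (hK : IsIntervalHypergraph K) :
    IsIntervalHypergraph
      (Sum.elim (fun i => Sum.inl '' H i) (fun j => Sum.inr '' K j) : ι ⊕ κ → Set (α ⊕ β)) := by
  obtain ⟨r, hr, hHr⟩ := hH
  obtain ⟨s, hs, hKs⟩ := hK
  exact ⟨Sum.Lex r s, isLinearOrder_sumLex,
    Sum.rec (fun i => (hHr i).image_inl) (fun j => (hKs j).image_inr)⟩

theorem sum_compl {U : Set α} {H : ι → Set U} {K : κ → Set ↥Uᶜ} (hH : IsIntervalHypergraph H)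
    (hK : IsIntervalHypergraph K) :
    IsIntervalHypergraph
      (Sum.elim (fun i => Subtype.val '' H i) (fun j => Subtype.val '' K j)) := by
  classical
  refine ((hH.sum hK).image_equiv (Equiv.Set.sumCompl U)).of_range_subset ?_
  rintro _ ⟨i | j, rfl⟩
  · exact ⟨.inl i, image_image _ _ _⟩
  · exact ⟨.inr j, image_image _ _ _⟩

end IsIntervalHypergraph

section Graph

variable {V : Type*} {G : SimpleGraph V}

/-- The hypergraph `N_U(G)` on the vertex set `U`, with one hyperedge `N(w) ∩ U` for each `w ∈ W`.
It is defined for arbitrary sets `U` and `W`, and used for the two sides of a bipartition. -/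
def sideNbhd (G : SimpleGraph V) (U W : Set V) (w : W) : Set U :=
  Subtype.val ⁻¹' G.neighborSet w

theorem sideNbhd_eq_setOf_adj (U W : Set V) :
    sideNbhd G U W = fun w : W => {u : U | G.Adj (u : V) (w : V)} := by
  ext w u
  exact G.adj_comm w u

theorem image_val_sideNbhd {U W : Set V} {w : W} (h : G.neighborSet w ⊆ U) :
    Subtype.val '' sideNbhd G U W w = G.neighborSet w :=
  image_preimage_eq_of_subset (Subtype.range_val.symm ▸ h)

theorem IsIntervalHypergraph.sideNbhd (h : IsIntervalHypergraph fun v : V => G.neighborSet v)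
    (U W : Set V) : IsIntervalHypergraph (sideNbhd G U W) :=
  (h.preimage Subtype.val_injective).of_range_subset
    (range_subset_iff.2 fun w => mem_range_self w.1)

theorem isIntervalHypergraph_neighborSet_of_sideNbhd {U : Set V}
    (hU : ∀ u ∈ U, ∀ v ∈ U, ¬ G.Adj u v) (hUc : ∀ u ∉ U, ∀ v ∉ U, ¬ G.Adj u v)
    (hNU : IsIntervalHypergraph (sideNbhd G U Uᶜ)) (hNUc : IsIntervalHypergraph (sideNbhd G Uᶜ U)) :
    IsIntervalHypergraph fun v : V => G.neighborSet v := by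
  refine (hNU.sum_compl hNUc).of_range_subset ?_
  rintro _ ⟨v, rfl⟩
  by_cases hv : v ∈ U
  · exact ⟨.inr ⟨v, hv⟩, image_val_sideNbhd fun w hvw hw => hU v hv w hw hvw⟩
  · exact ⟨.inl ⟨v, hv⟩, image_val_sideNbhd fun w hvw => by_contra fun hw => hUc v hv w hw hvw⟩

/-- The vertices that are the lower end, with respect to `r`, of some edge of `G`. For an interval
ordering `r` of `N(G)` they form one side of a bipartition. -/
def lowerEnds (G : SimpleGraph V) (r : V → V → Prop) : Set V :=
  {v | ∃ w, G.Adj v w ∧ r v w}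

theorem not_rel_of_rel_of_isIntervalWrt_neighborSet {r : V → V → Prop} {v x z : V}
    (hI : IsIntervalWrt r (G.neighborSet v)) (hx : G.Adj v x) (hz : G.Adj v z) (hxv : r x v) :
    ¬ r v z :=
  fun hvz => G.irrefl (hI x v z hxv hvz hx hz)

theorem not_adj_of_mem_lowerEnds {r : V → V → Prop} [Std.Total r] {u v : V}
    (hIu : IsIntervalWrt r (G.neighborSet u)) (hIv : IsIntervalWrt r (G.neighborSet v))
    (hu : u ∈ lowerEnds G r) (hv : v ∈ lowerEnds G r) : ¬ G.Adj u v := by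
  obtain ⟨a, hua, hra⟩ := hu
  obtain ⟨b, hvb, hrb⟩ := hv
  intro huv
  rcases total_of r u v with h | h
  · exact not_rel_of_rel_of_isIntervalWrt_neighborSet hIv huv.symm hvb h hrb
  · exact not_rel_of_rel_of_isIntervalWrt_neighborSet hIu huv hua h hra

theorem not_adj_of_notMem_lowerEnds {r : V → V → Prop} [Std.Total r] {u v : V}
    (hu : u ∉ lowerEnds G r) (hv : v ∉ lowerEnds G r) : ¬ G.Adj u v := fun huv =>
  (total_of r u v).elim (fun h => hu ⟨v, huv, h⟩) (fun h => hv ⟨u, huv.symm, h⟩)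

theorem IsIntervalHypergraph.isBipartite (h : IsIntervalHypergraph fun v : V => G.neighborSet v) :
    IsBipartite G := by
  obtain ⟨r, hr, hI⟩ := h
  exact ⟨lowerEnds G r, fun u hu v hv => not_adj_of_mem_lowerEnds (hI u) (hI v) hu hv,
    fun u hu v hv => not_adj_of_notMem_lowerEnds hu hv⟩

end Graph

theorem stmt4_general {V : Type*} (G : SimpleGraph V) :
    (∃ U W : Set V, U ∪ W = Set.univ ∧ U ∩ W = ∅ ∧
      (∀ u ∈ U, ∀ v ∈ U, ¬ G.Adj u v) ∧
      (∀ u ∈ W, ∀ v ∈ W, ¬ G.Adj u v) ∧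
      IsIntervalHypergraph (fun w : W => {u : U | G.Adj (u : V) (w : V)}) ∧
      IsIntervalHypergraph (fun u : U => {w : W | G.Adj (u : V) (w : V)}))
    ↔ IsIntervalHypergraph (fun v : V => G.neighborSet v) := by
  constructor
  · rintro ⟨U, W, hunion, hinter, hU, hW, hNU, hNW⟩
    obtain rfl : Uᶜ = W := (IsCompl.of_eq hinter hunion).compl_eq
    rw [← sideNbhd_eq_setOf_adj] at hNU
    exact isIntervalHypergraph_neighborSet_of_sideNbhd hU hW hNU hNW
  · intro h
    obtain ⟨U, hU, hUc⟩ := h.isBipartite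
    refine ⟨U, Uᶜ, union_compl_self U, inter_compl_self U, hU, hUc, ?_, h.sideNbhd Uᶜ U⟩
    rw [← sideNbhd_eq_setOf_adj]
    exact h.sideNbhd U Uᶜ

/-- A finite simple graph `G` is biconvex (it admits a bipartition into
independent sets `U`, `W` such that both `N_U(G)` and `N_W(G)` are interval hypergraphs)
iff its open neighborhood hypergraph `N(G)` is an interval hypergraph. -/
theorem stmt4 {V : Type*} [Fintype V] (G : SimpleGraph V) :
    (∃ U W : Set V, U ∪ W = Set.univ ∧ U ∩ W = ∅ ∧
      (∀ u ∈ U, ∀ v ∈ U, ¬ G.Adj u v) ∧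
      (∀ u ∈ W, ∀ v ∈ W, ¬ G.Adj u v) ∧
      IsIntervalHypergraph (fun w : W => {u : U | G.Adj (u : V) (w : V)}) ∧
      IsIntervalHypergraph (fun u : U => {w : W | G.Adj (u : V) (w : V)}))
    ↔ IsIntervalHypergraph (fun v : V => G.neighborSet v) :=
  stmt4_general G
end

section
/- Let H be a hypergraph on a finite vertex set V and let H^⊂ denote its tightened hypergraph H ∪ {A \ B : A, B ∈ H, B ⊊ A}. Then: (a) a linear order ≤ on V is a tight interval ordering of H if and only if it is an interval ordering of H^⊂; (b) a bijection f : V → ZMod n (n = |V|) is a tight arc ordering of H if and only if it is an arc ordering of H^⊂. -/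
/-!
For intervals `∅ ≠ B ⊆ A` of a total preorder, with `A` finite, the difference `A \ B` is an
interval if and only if `B` contains a minimum or a maximum of `A`: if it contains a minimum, then
`A \ B` is the part of `A` above `B`, and if it misses both extremes, then any point of `B` lies
between two points of `A \ B`.

On the circle, a point `c` outside `A` turns this into a statement about arcs. Cutting the circle
at `c` yields a linear order whose intervals are, among the sets avoiding `c`, precisely the arcs,
and a common start (end) point becomes a common minimum (maximum). If `A` is the whole circle, then
`A \ B` is an arc anyway, being the complement of one.
-/

open Set

/-- The tightened hypergraph `H^⊂ = H ∪ {A \ B : A, B ∈ H, B ⊊ A}`. -/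
def Tightened {V : Type*} (H : Set (Set V)) : Set (Set V) :=
  H ∪ {S | ∃ A ∈ H, ∃ B ∈ H, B ⊂ A ∧ S = A \ B}

/-- `r` is an interval ordering of the hyperedge family `H`. -/
def IsIntervalOrderingSet {V : Type*} (r : V → V → Prop) (H : Set (Set V)) : Prop :=
  ∀ A ∈ H, IsIntervalWrt r A

/-- `r` is a tight interval ordering of `H`: whenever `A ⊇ B` with `B` nonempty,
the intervals `A` and `B` have the same minimum or the same maximum. -/
def IsTightIntervalOrderingSet {V : Type*} (r : V → V → Prop) (H : Set (Set V)) : Prop :=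
  IsIntervalOrderingSet r H ∧
  ∀ A ∈ H, ∀ B ∈ H, B ⊆ A → B.Nonempty →
    (∃ m ∈ B, ∀ x ∈ A, r m x) ∨ (∃ m ∈ B, ∀ x ∈ A, r x m)

/-- `f` is an arc ordering of the hyperedge family `H`. -/
def IsArcOrderingSet {V : Type*} (n : ℕ) (f : V ≃ ZMod n) (H : Set (Set V)) : Prop :=
  ∀ A ∈ H, IsArc n (f '' A)

/-- `f` is a tight arc ordering of `H`: whenever `A ⊇ B` with `B` nonempty and
`f(A) ≠ ZMod n`, the arcs `f(A)` and `f(B)` share their start or their end point. -/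
def IsTightArcOrderingSet {V : Type*} (n : ℕ) (f : V ≃ ZMod n) (H : Set (Set V)) : Prop :=
  IsArcOrderingSet n f H ∧
  ∀ A ∈ H, ∀ B ∈ H, B ⊆ A → B.Nonempty → f '' A ≠ Set.univ →
    SharesStart n (f '' A) (f '' B) ∨ SharesEnd n (f '' A) (f '' B)

section Interval

variable {α : Type*} {r : α → α → Prop} {A B : Set α}

/-- The intervals `B ⊆ A` have the same minimum with respect to `r`. The inclusion is not part of
the definition; given it, the condition says that `B` contains a least element of `A`. -/
def SharesMin (r : α → α → Prop) (A B : Set α) : Prop :=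
  ∃ m ∈ B, ∀ x ∈ A, r m x

/-- The intervals `B ⊆ A` have the same maximum with respect to `r`; this is `SharesMin` for the
reversed relation. -/
def SharesMax (r : α → α → Prop) (A B : Set α) : Prop :=
  ∃ m ∈ B, ∀ x ∈ A, r x m

theorem IsIntervalWrt.swap (hA : IsIntervalWrt r A) : IsIntervalWrt (Function.swap r) A :=
  fun x y z hyx hzy hx hz => hA z y x hzy hyx hz hx

theorem isIntervalWrt_empty (r : α → α → Prop) : IsIntervalWrt r ∅ :=
  fun _ _ _ _ _ hx _ => hx

theorem exists_forall_rel_of_finite [IsTrans α r] [Std.Total r] (hA : A.Finite)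
    (hne : A.Nonempty) : ∃ b ∈ A, ∀ x ∈ A, r x b := by
  have := hA.to_subtype
  have := hne.to_subtype
  obtain ⟨b, hb⟩ := (Std.Total.directed (r := r) ((↑) : A → α)).finite_le id
  exact ⟨b, b.2, fun x hx => hb ⟨x, hx⟩⟩

theorem IsIntervalWrt.sdiff_of_sharesMin (hA : IsIntervalWrt r A) (hB : IsIntervalWrt r B)
    (h : SharesMin r A B) : IsIntervalWrt r (A \ B) := by
  rintro x y z hxy hyz ⟨hxA, hxB⟩ ⟨hzA, -⟩
  obtain ⟨m, hmB, hm⟩ := h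
  exact ⟨hA x y z hxy hyz hxA hzA, fun hyB => hxB (hB m x y (hm x hxA) hxy hmB hyB)⟩

theorem IsIntervalWrt.sdiff_of_sharesMax (hA : IsIntervalWrt r A) (hB : IsIntervalWrt r B)
    (h : SharesMax r A B) : IsIntervalWrt r (A \ B) :=
  (hA.swap.sdiff_of_sharesMin hB.swap h).swap

theorem sharesMin_or_sharesMax_of_isIntervalWrt_sdiff [IsTrans α r] [Std.Total r]
    (hA : A.Finite) (hBA : B ⊆ A) (hne : B.Nonempty) (h : IsIntervalWrt r (A \ B)) :
    SharesMin r A B ∨ SharesMax r A B := by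
  obtain ⟨y, hy⟩ := hne
  obtain ⟨a, haA, ha⟩ := exists_forall_rel_of_finite (r := Function.swap r) hA ⟨y, hBA hy⟩
  obtain ⟨b, hbA, hb⟩ := exists_forall_rel_of_finite (r := r) hA ⟨y, hBA hy⟩
  by_contra! hshare
  have haB : a ∉ B := fun haB => hshare.1 ⟨a, haB, ha⟩
  have hbB : b ∉ B := fun hbB => hshare.2 ⟨b, hbB, hb⟩
  exact (h a y b (ha y (hBA hy)) (hb y (hBA hy)) ⟨haA, haB⟩ ⟨hbA, hbB⟩).2 hy

theorem isIntervalWrt_sdiff_iff [IsTrans α r] [Std.Total r] (hfin : A.Finite)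
    (hA : IsIntervalWrt r A) (hB : IsIntervalWrt r B) (hBA : B ⊆ A) (hne : B.Nonempty) :
    IsIntervalWrt r (A \ B) ↔ SharesMin r A B ∨ SharesMax r A B :=
  ⟨sharesMin_or_sharesMax_of_isIntervalWrt_sdiff hfin hBA hne,
    fun h => h.elim (hA.sdiff_of_sharesMin hB) (hA.sdiff_of_sharesMax hB)⟩

end Interval

section Cut

variable {n : ℕ}

/-- The position of `x` on the circle `ZMod n` cut open just before `c`, that is, in the list
`c, c + 1, …, c + (n - 1)` indexed from `0`. For `n = 0` it is the distance `|x - c|` in `ℤ`,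
a junk value. -/
def cutPos (c x : ZMod n) : ℕ := (x - c).val

/-- The linear order `c, c + 1, …, c + (n - 1)` obtained by cutting the circle `ZMod n` open just
before `c`. -/
def cutLE (c x y : ZMod n) : Prop := cutPos c x ≤ cutPos c y

instance (c : ZMod n) : IsTrans (ZMod n) (cutLE c) := ⟨fun _ _ _ => le_trans (α := ℕ)⟩

instance (c : ZMod n) : Std.Total (cutLE c) := ⟨fun _ _ => le_total (α := ℕ) _ _⟩

theorem cutPos_eq_zero {c x : ZMod n} : cutPos c x = 0 ↔ x = c := by
  rw [cutPos, ZMod.val_eq_zero, sub_eq_zero]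

theorem cutPos_self (c : ZMod n) : cutPos c c = 0 :=
  cutPos_eq_zero.2 rfl

theorem cutPos_add_natCast {k : ℕ} (c : ZMod n) (hk : k < n) : cutPos c (c + k) = k := by
  rw [cutPos, add_sub_cancel_left, ZMod.val_cast_of_lt hk]

variable [NeZero n]

theorem cutPos_lt (c x : ZMod n) : cutPos c x < n := ZMod.val_lt _

theorem add_cutPos (c x : ZMod n) : c + (cutPos c x : ZMod n) = x := by
  rw [cutPos, ZMod.natCast_zmod_val, add_sub_cancel]

theorem cutPos_add_cutPos (c a x : ZMod n) :
    cutPos c a + cutPos a x = cutPos c x ∨ cutPos c a + cutPos a x = cutPos c x + n := by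
  have hsum : (a - c) + (x - a) = x - c := by ring
  unfold cutPos
  rw [← hsum]
  rcases lt_or_ge ((a - c).val + (x - a).val) n with hlt | hge
  · exact Or.inl (ZMod.val_add_of_lt hlt).symm
  · exact Or.inr (ZMod.val_add_val_of_le hge)

theorem cutPos_add_one {c x : ZMod n} (h : cutPos c x + 1 < n) :
    cutPos c (x + 1) = cutPos c x + 1 := by
  have hx : x + 1 = c + (cutPos c x + 1 : ℕ) := by
    rw [Nat.cast_add_one, ← add_assoc, add_cutPos]
  rw [hx, cutPos_add_natCast c h]

theorem cutPos_sub_one {c x : ZMod n} (h : x ≠ c) : cutPos c x = cutPos c (x - 1) + 1 := by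
  obtain ⟨k, hk⟩ := Nat.exists_eq_add_one_of_ne_zero (mt cutPos_eq_zero.1 h)
  have hx : x - 1 = c + k := by
    rw [sub_eq_iff_eq_add, add_assoc, ← Nat.cast_add_one, ← hk, add_cutPos]
  have hlt := cutPos_lt c x
  rw [hx, cutPos_add_natCast c (by omega), hk]

end Cut

section Arc

variable {n : ℕ} {A B : Set (ZMod n)} {c : ZMod n}

theorem isArc_empty (n : ℕ) : IsArc n ∅ :=
  ⟨0, 0, n.zero_le, by simp⟩

variable [NeZero n]

theorem isArc_iff_exists_cutPos_lt : IsArc n A ↔ ∃ a k, ∀ x, x ∈ A ↔ cutPos a x < k := by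
  constructor
  · rintro ⟨a, k, hk, rfl⟩
    refine ⟨a, k, fun x => ⟨?_, fun hx => ⟨cutPos a x, hx, (add_cutPos a x).symm⟩⟩⟩
    rintro ⟨i, hi, rfl⟩
    rwa [cutPos_add_natCast a (hi.trans_le hk)]
  · rintro ⟨a, k, hA⟩
    refine ⟨a, min k n, min_le_right k n, Set.ext fun x => (hA x).trans ⟨fun hx => ?_, ?_⟩⟩
    · exact ⟨cutPos a x, lt_min hx (cutPos_lt a x), (add_cutPos a x).symm⟩
    · rintro ⟨i, hi, rfl⟩
      rw [lt_min_iff] at hi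
      rw [cutPos_add_natCast a hi.2]
      exact hi.1

theorem IsArc.isIntervalWrt_cutLE (hA : IsArc n A) (hc : c ∉ A) : IsIntervalWrt (cutLE c) A := by
  obtain ⟨a, k, hA⟩ := isArc_iff_exists_cutPos_lt.1 hA
  intro x y z (hxy : cutPos c x ≤ cutPos c y) (hyz : cutPos c y ≤ cutPos c z) hx hz
  rw [hA] at hc hx hz ⊢
  have arc_before_cut (w : ZMod n) (hw : cutPos a w < k) :
      cutPos c a + cutPos a w = cutPos c w := by
    have hcut_c := cutPos_add_cutPos c a c
    rw [cutPos_self] at hcut_c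
    have hcut_w := cutPos_add_cutPos c a w
    omega
  have hx' := arc_before_cut x hx
  have hz' := arc_before_cut z hz
  have hlt_y := cutPos_lt a y
  have hy' : cutPos c a + cutPos a y = cutPos c y :=
    (cutPos_add_cutPos c a y).resolve_right (by omega)
  omega

theorem IsIntervalWrt.isArc (hA : IsIntervalWrt (cutLE c) A) : IsArc n A := by
  rcases A.eq_empty_or_nonempty with rfl | hne
  · exact isArc_empty n
  obtain ⟨a, haA, ha⟩ := exists_forall_rel_of_finite (r := Function.swap (cutLE c)) A.toFinite hne
  obtain ⟨b, hbA, hb⟩ := exists_forall_rel_of_finite (r := cutLE c) A.toFinite hne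
  have mem_iff (x : ZMod n) : x ∈ A ↔ cutPos c a ≤ cutPos c x ∧ cutPos c x ≤ cutPos c b :=
    ⟨fun hx => ⟨ha x hx, hb x hx⟩, fun hx => hA a x b hx.1 hx.2 haA hbA⟩
  refine isArc_iff_exists_cutPos_lt.2 ⟨a, cutPos c b + 1 - cutPos c a, fun x => ?_⟩
  rw [mem_iff]
  have hcut_x := cutPos_add_cutPos c a x
  have hlt_x := cutPos_lt a x
  have hlt_b := cutPos_lt c b
  omega

theorem isArc_iff_isIntervalWrt_cutLE (hc : c ∉ A) : IsArc n A ↔ IsIntervalWrt (cutLE c) A :=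
  ⟨fun hA => hA.isIntervalWrt_cutLE hc, IsIntervalWrt.isArc⟩

-- In the order cut at the start point of an arc, the complement of the arc is an upper set.
theorem IsArc.compl (hA : IsArc n A) : IsArc n Aᶜ := by
  obtain ⟨a, k, hA⟩ := isArc_iff_exists_cutPos_lt.1 hA
  refine IsIntervalWrt.isArc (c := a) fun x y _ hxy _ hx _ => ?_
  rw [Set.mem_compl_iff, hA, not_lt] at hx ⊢
  exact hx.trans hxy

theorem IsIntervalWrt.sub_one_notMem_iff {a : ZMod n} (hA : IsIntervalWrt (cutLE c) A)
    (hc : c ∉ A) (ha : a ∈ A) : a - 1 ∉ A ↔ ∀ x ∈ A, cutLE c a x := by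
  have hpred : cutPos c a = cutPos c (a - 1) + 1 := cutPos_sub_one (ne_of_mem_of_not_mem ha hc)
  constructor
  · intro hpredA x hx
    by_contra hlt
    have hlt : cutPos c x < cutPos c a := not_le.1 hlt
    exact hpredA (hA x (a - 1) a (by unfold cutLE; omega) (by unfold cutLE; omega) hx ha)
  · intro hmin hpredA
    have : cutPos c a ≤ cutPos c (a - 1) := hmin _ hpredA
    omega

theorem IsIntervalWrt.add_one_notMem_iff {a : ZMod n} (hA : IsIntervalWrt (cutLE c) A)
    (hc : c ∉ A) (ha : a ∈ A) : a + 1 ∉ A ↔ ∀ x ∈ A, cutLE c x a := by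
  constructor
  · intro hsuccA x hx
    by_contra hlt
    have hlt : cutPos c a < cutPos c x := not_le.1 hlt
    have hxn := cutPos_lt c x
    have hsucc : cutPos c (a + 1) = cutPos c a + 1 := cutPos_add_one (by omega)
    exact hsuccA (hA a (a + 1) x (by unfold cutLE; omega) (by unfold cutLE; omega) ha hx)
  · intro hmax hsuccA
    have hle : cutPos c (a + 1) ≤ cutPos c a := hmax _ hsuccA
    rw [cutPos_sub_one (ne_of_mem_of_not_mem hsuccA hc), add_sub_cancel_right] at hle
    omega

theorem sharesStart_iff_sharesMin (hA : IsIntervalWrt (cutLE c) A) (hc : c ∉ A) (hBA : B ⊆ A) :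
    SharesStart n A B ↔ SharesMin (cutLE c) A B := by
  constructor
  · rintro ⟨a, haA, hpredA, haB, -⟩
    exact ⟨a, haB, (hA.sub_one_notMem_iff hc haA).1 hpredA⟩
  · rintro ⟨m, hmB, hmin⟩
    have hpredA : m - 1 ∉ A := (hA.sub_one_notMem_iff hc (hBA hmB)).2 hmin
    exact ⟨m, hBA hmB, hpredA, hmB, fun hpredB => hpredA (hBA hpredB)⟩

theorem sharesEnd_iff_sharesMax (hA : IsIntervalWrt (cutLE c) A) (hc : c ∉ A) (hBA : B ⊆ A) :
    SharesEnd n A B ↔ SharesMax (cutLE c) A B := by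
  constructor
  · rintro ⟨a, haA, hsuccA, haB, -⟩
    exact ⟨a, haB, (hA.add_one_notMem_iff hc haA).1 hsuccA⟩
  · rintro ⟨m, hmB, hmax⟩
    have hsuccA : m + 1 ∉ A := (hA.add_one_notMem_iff hc (hBA hmB)).2 hmax
    exact ⟨m, hBA hmB, hsuccA, hmB, fun hsuccB => hsuccA (hBA hsuccB)⟩

theorem isArc_sdiff_iff_of_ne_univ (hA : IsArc n A) (hB : IsArc n B) (hBA : B ⊆ A)
    (hne : B.Nonempty) (huniv : A ≠ univ) :
    IsArc n (A \ B) ↔ SharesStart n A B ∨ SharesEnd n A B := by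
  obtain ⟨c, hc⟩ := (ne_univ_iff_exists_notMem A).1 huniv
  have hA' := hA.isIntervalWrt_cutLE hc
  have hB' := hB.isIntervalWrt_cutLE fun hcB => hc (hBA hcB)
  rw [isArc_iff_isIntervalWrt_cutLE fun hcAB => hc hcAB.1, sharesStart_iff_sharesMin hA' hc hBA,
    sharesEnd_iff_sharesMax hA' hc hBA]
  exact isIntervalWrt_sdiff_iff A.toFinite hA' hB' hBA hne

theorem isArc_sdiff_iff (hA : IsArc n A) (hB : IsArc n B) (hBA : B ⊆ A) (hne : B.Nonempty) :
    IsArc n (A \ B) ↔ (A ≠ univ → SharesStart n A B ∨ SharesEnd n A B) := by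
  by_cases huniv : A = univ
  · subst huniv
    simpa [← compl_eq_univ_sdiff] using hB.compl
  · rw [isArc_sdiff_iff_of_ne_univ hA hB hBA hne huniv, imp_iff_right huniv]

end Arc

section Tightened

variable {V : Type*} {H : Set (Set V)}

theorem forall_mem_tightened_iff {P : Set V → Prop} :
    (∀ S ∈ Tightened H, P S) ↔
      (∀ A ∈ H, P A) ∧ ∀ A ∈ H, ∀ B ∈ H, B ⊂ A → P (A \ B) := by
  constructor
  · exact fun h => ⟨fun A hA => h A (Or.inl hA),
      fun A hA B hB hBA => h _ (Or.inr ⟨A, hA, B, hB, hBA, rfl⟩)⟩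
  · rintro ⟨hH, hdiff⟩ S (hS | ⟨A, hA, B, hB, hBA, rfl⟩)
    exacts [hH S hS, hdiff A hA B hB hBA]

theorem tight_iff_forall_mem_tightened {P : Set V → Prop} {T : Set V → Set V → Prop}
    (hempty : P ∅)
    (hdiff : ∀ A ∈ H, ∀ B, P A → P B → B ⊆ A → B.Nonempty → (P (A \ B) ↔ T A B)) :
    ((∀ A ∈ H, P A) ∧ ∀ A ∈ H, ∀ B ∈ H, B ⊆ A → B.Nonempty → T A B) ↔
      ∀ S ∈ Tightened H, P S := by
  rw [forall_mem_tightened_iff]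
  refine and_congr_right fun hP => forall₄_congr fun A hA B hB => ?_
  constructor
  · intro hT hBA
    rcases B.eq_empty_or_nonempty with rfl | hne
    · simpa using hP A hA
    · exact (hdiff A hA B (hP A hA) (hP B hB) hBA.subset hne).2 (hT hBA.subset hne)
  · intro hP' hBA hne
    refine (hdiff A hA B (hP A hA) (hP B hB) hBA hne).1 ?_
    rcases hBA.eq_or_ssubset with rfl | hss
    · simpa using hempty
    · exact hP' hss

theorem isTightIntervalOrderingSet_iff {r : V → V → Prop} [IsTrans V r] [Std.Total r]
    (hfin : ∀ A ∈ H, A.Finite) :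
    IsTightIntervalOrderingSet r H ↔ IsIntervalOrderingSet r (Tightened H) :=
  tight_iff_forall_mem_tightened (isIntervalWrt_empty r)
    fun A hA _ => isIntervalWrt_sdiff_iff (hfin A hA)

theorem isTightArcOrderingSet_iff {n : ℕ} [NeZero n] (f : V ≃ ZMod n) :
    IsTightArcOrderingSet n f H ↔ IsArcOrderingSet n f (Tightened H) := by
  refine tight_iff_forall_mem_tightened (by simpa using isArc_empty n)
    fun A _ B hA hB hBA hne => ?_
  rw [image_sdiff f.injective]
  exact isArc_sdiff_iff hA hB (image_mono hBA) (hne.image f)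

end Tightened

theorem stmt5_general {V : Type*} (H : Set (Set V)) :
    (∀ (r : V → V → Prop) [IsTrans V r] [Std.Total r], (∀ A ∈ H, A.Finite) →
      (IsTightIntervalOrderingSet r H ↔ IsIntervalOrderingSet r (Tightened H))) ∧
    (∀ (n : ℕ) [NeZero n] (f : V ≃ ZMod n),
      (IsTightArcOrderingSet n f H ↔ IsArcOrderingSet n f (Tightened H))) :=
  ⟨fun _ _ _ => isTightIntervalOrderingSet_iff, fun _ _ => isTightArcOrderingSet_iff⟩

/-- (a) A linear order on `V` is a tight interval ordering of `H` iff
it is an interval ordering of the tightened hypergraph `H^⊂`; (b) a bijection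
`V ≃ ZMod n` (with `n = |V|`) is a tight arc ordering of `H` iff it is an arc ordering
of `H^⊂`. -/
theorem stmt5 {V : Type*} [Fintype V] (H : Set (Set V)) :
    (∀ r : V → V → Prop, IsLinearOrder V r →
      (IsTightIntervalOrderingSet r H ↔ IsIntervalOrderingSet r (Tightened H))) ∧
    (∀ f : V ≃ ZMod (Fintype.card V),
      (IsTightArcOrderingSet (Fintype.card V) f H ↔
        IsArcOrderingSet (Fintype.card V) f (Tightened H))) := by
  -- `ZMod 0 = ℤ` is inhabited, so the bijection `f` rules out an empty `V`.
  exact ⟨fun r _ => (stmt5_general H).1 r fun A _ => A.toFinite, fun f =>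
    have : Nonempty V := ⟨f.symm 0⟩
    (stmt5_general H).2 _ f⟩
end

section
/- Let λ and λ' be two arc representations of a hypergraph H on the circle ZMod n, i.e., bijections from V(H) to ZMod n mapping every hyperedge of H to an arc. Then λ' = λ ∘ π for some permutation of twins π of H if and only if λ(A) = λ'(A) for every hyperedge A ∈ H. -/
open Set

/-- Two vertices are twins in the hypergraph with hyperedge set `H` if every hyperedge contains
both of them or neither. -/
def AreTwins {V : Type*} (H : Set (Set V)) (u v : V) : Prop :=
  ∀ A ∈ H, u ∈ A ↔ v ∈ A

/-- Permutations of twins of the hypergraph with hyperedge set `H`, encoded pointwise: every vertex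
is a twin of its image. -/
def IsTwinPerm {V : Type*} (H : Set (Set V)) (π : Equiv.Perm V) : Prop :=
  ∀ x, AreTwins H x (π x)

section TwinPerm

variable {V W : Type*} {H : Set (Set V)}

theorem isTwinPerm_iff_image_eq {π : Equiv.Perm V} :
    IsTwinPerm H π ↔ ∀ A ∈ H, π '' A = A :=
  calc IsTwinPerm H π ↔ ∀ A ∈ H, A = π ⁻¹' A :=
        ⟨fun hπ A hA => Set.ext fun x => hπ x A hA, fun h x A hA => Set.ext_iff.1 (h A hA) x⟩
    _ ↔ ∀ A ∈ H, π '' A = A := by simp only [Equiv.eq_preimage_iff_image_eq]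

theorem isTwinPerm_iff_image_eq_image_comp {f : V → W} (hf : Function.Injective f)
    {π : Equiv.Perm V} : IsTwinPerm H π ↔ ∀ A ∈ H, f '' A = (f ∘ π) '' A := by
  simp only [isTwinPerm_iff_image_eq, image_comp, hf.image_injective.eq_iff, eq_comm]

end TwinPerm

theorem stmt6_general {V W : Type*} (H : Set (Set V)) (e e' : V ≃ W) :
    (∃ π : Equiv.Perm V, IsTwinPerm H π ∧ ∀ x, e' x = e (π x)) ↔
    (∀ A ∈ H, e '' A = e' '' A) := by
  constructor
  · rintro ⟨π, hπ, he'⟩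
    obtain rfl : e' = π.trans e := Equiv.ext he'
    exact (isTwinPerm_iff_image_eq_image_comp e.injective).1 hπ
  · intro h
    have he' : ⇑e' = e ∘ e'.trans e.symm := funext fun x => (e.apply_symm_apply (e' x)).symm
    rw [he'] at h
    exact ⟨_, (isTwinPerm_iff_image_eq_image_comp e.injective).2 h, congrFun he'⟩

/-- Two arc representations `lam`, `lam'` of a hypergraph `H` on the
circle `ZMod n` differ by a permutation of twins iff they map every hyperedge to the
same arc. -/
theorem stmt6 {V : Type*} [Fintype V] {n : ℕ} (H : Set (Set V))
    (lam lam' : V ≃ ZMod n)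
    (hlam : ∀ A ∈ H, IsArc n (lam '' A))
    (hlam' : ∀ A ∈ H, IsArc n (lam' '' A)) :
    (∃ π : Equiv.Perm V, (∀ x, ∀ A ∈ H, x ∈ A ↔ π x ∈ A) ∧ ∀ x, lam' x = lam (π x)) ↔
    (∀ A ∈ H, lam '' A = lam' '' A) :=
  stmt6_general H lam lam'
end

section
/- Let H be a connected interval hypergraph on n vertices and let λ, λ' : V(H) → {1, …, n} be two tight interval representations of H. Then λ' = σ ∘ λ ∘ π, where σ is either the identity or the reflection x ↦ n+1−x of {1, …, n}, and π is a permutation of twins of H. -/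
open Set

/-- The hypergraph `H` is connected: no isolated vertex, and the intersection graph
of its hyperedges is connected. -/
def ConnectedHypergraph {V : Type*} (H : Set (Set V)) : Prop :=
  (∀ x : V, ∃ A ∈ H, x ∈ A) ∧
  ∀ A ∈ H, ∀ B ∈ H, Relation.ReflTransGen
    (fun X Y => X ∈ H ∧ Y ∈ H ∧ (X ∩ Y).Nonempty) A B

/-- `lam : V ≃ Fin n` is a tight interval representation of `H`: every hyperedge is
mapped to an interval of `Fin n`, and whenever `A ⊇ B` with `B` nonempty, the image
intervals have the same minimum or the same maximum. -/
def IsTightIntervalRep {V : Type*} {n : ℕ} (H : Set (Set V)) (lam : V ≃ Fin n) : Prop :=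
  (∀ A ∈ H, ∀ x y z : Fin n, x ≤ y → y ≤ z →
    x ∈ lam '' A → z ∈ lam '' A → y ∈ lam '' A) ∧
  (∀ A ∈ H, ∀ B ∈ H, B ⊆ A → B.Nonempty →
    (∃ m ∈ lam '' B, ∀ x ∈ lam '' A, m ≤ x) ∨ (∃ m ∈ lam '' B, ∀ x ∈ lam '' A, x ≤ m))

/-!
In a tight representation any two hyperedges are comparable in the componentwise order on
(left end, right end). Let `c A` be the sum of the two ends of the interval of `A`, twice its
midpoint. Comparability gives `|c A - c B| = |A ∆ B|` when `A` and `B` meet, and it puts two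
disjoint hyperedges `B`, `C` that both meet `A` on opposite sides of `A`, so that
`|c B - c C| = |A ∆ B| + |A ∆ C|`. Hence the distances between the midpoints of the hyperedges
meeting a given `A` depend on `H` only: any two tight representations agree there up to an isometry
of the line. Distinct hyperedges that meet have distinct midpoints, so the direction of this
isometry is the same at both of them and, by connectedness, at all hyperedges. An isometry that
carries midpoints to midpoints carries intervals to intervals, and two injections with the same
image on every hyperedge differ by a permutation of twins.
-/

section StarIsometry

variable {ι G : Type*} [AddCommGroup G] [LinearOrder G] {R : ι → ι → Prop} {f g : ι → G}

/-- `f` and `g` induce the same distances on every closed star `{a} ∪ {b | R a b}` of the graph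
`R`; a local form of being isometric. -/
structure StarIsometric (R : ι → ι → Prop) (f g : ι → G) : Prop where
  edge : ∀ ⦃a b⦄, R a b → |f b - f a| = |g b - g a|
  star : ∀ ⦃a b c⦄, R a b → R a c → |f b - f c| = |g b - g c|

lemma StarIsometric.neg_left (h : StarIsometric R f g) : StarIsometric R (-f) g where
  edge a b hab := by rw [← h.edge hab, abs_sub_comm, Pi.neg_apply, Pi.neg_apply, neg_sub_neg]
  star a b c hab hac := by
    rw [← h.star hab hac, abs_sub_comm, Pi.neg_apply, Pi.neg_apply, neg_sub_neg]

variable [IsOrderedAddMonoid G]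

lemma eq_of_abs_eq_abs_of_abs_sub_eq_abs_sub {x y z : G} (hx : x ≠ 0) (hyz : |y| = |z|)
    (hsub : |x - y| = |x - z|) : y = z := by
  rcases abs_eq_abs.1 hyz with rfl | rfl
  · rfl
  · rcases abs_eq_abs.1 hsub with h | h
    · exact sub_right_inj.1 h
    · have hneg : x = -x := by
        rwa [sub_neg_eq_add, neg_sub, sub_eq_neg_add, add_left_inj] at h
      exact absurd (self_eq_neg.1 hneg) hx

lemma StarIsometric.sub_eq_sub (h : StarIsometric R f g) {a b c : ι} (hab : R a b) (hac : R a c)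
    (hne : f a ≠ f b) (hdir : g b - g a = f b - f a) : g c - g a = f c - f a := by
  refine eq_of_abs_eq_abs_of_abs_sub_eq_abs_sub (sub_ne_zero.2 hne.symm) (h.edge hac).symm ?_
  calc |f b - f a - (g c - g a)| = |g b - g c| := by rw [← hdir, sub_sub_sub_cancel_right]
    _ = |f b - f c| := (h.star hab hac).symm
    _ = |f b - f a - (f c - f a)| := by rw [sub_sub_sub_cancel_right]

lemma StarIsometric.forall_sub_eq_sub_or (h : StarIsometric R f g) (a : ι) :
    (∀ b, R a b → g b - g a = f b - f a) ∨ ∀ b, R a b → g b - g a = (-f) b - (-f) a := by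
  by_cases hex : ∃ b, R a b ∧ f a ≠ f b
  · obtain ⟨b, hab, hne⟩ := hex
    rcases abs_eq_abs.1 (h.edge hab).symm with hdir | hdir
    · exact .inl fun c hac => h.sub_eq_sub hab hac hne hdir
    · refine .inr fun c hac => h.neg_left.sub_eq_sub hab hac (neg_injective.ne hne) ?_
      rw [hdir, Pi.neg_apply, Pi.neg_apply, neg_sub_neg, neg_sub]
  · push Not at hex
    refine .inl fun b hab => ?_
    have hedge := h.edge hab
    rw [← hex b hab, sub_self, abs_zero, eq_comm, abs_eq_zero] at hedge
    rw [hedge, ← hex b hab, sub_self]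

lemma StarIsometric.sub_eq_sub_of_reflTransGen (h : StarIsometric R f g) [Std.Symm R]
    (hinj : ∀ ⦃a b⦄, R a b → f a = f b → a = b) {a b : ι}
    (ha : ∀ b, R a b → g b - g a = f b - f a) (hab : Relation.ReflTransGen R a b) :
    g b - g a = f b - f a := by
  suffices hb : g b - g a = f b - f a ∧ ∀ c, R b c → g c - g b = f c - f b from hb.1
  induction hab with
  | refl => exact ⟨by simp only [sub_self], ha⟩
  | @tail b c _ hbc ih =>
    obtain ⟨hb, hstar⟩ := ih
    have hcb : g c - g b = f c - f b := hstar c hbc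
    refine ⟨by rw [← sub_add_sub_cancel, hcb, hb, sub_add_sub_cancel], fun d hcd => ?_⟩
    by_cases hne : f c = f b
    · obtain rfl := hinj (symm_of R hbc) hne
      exact hstar d hcd
    · exact h.sub_eq_sub (symm_of R hbc) hcd hne (by rw [← neg_sub, hcb, neg_sub])

lemma StarIsometric.exists_eq_add_or_exists_eq_sub (h : StarIsometric R f g)
    [Std.Symm R] (hinj : ∀ ⦃a b⦄, R a b → f a = f b → a = b) (a : ι) :
    (∃ t, ∀ b, Relation.ReflTransGen R a b → g b = f b + t) ∨
      ∃ t, ∀ b, Relation.ReflTransGen R a b → g b = t - f b := by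
  rcases h.forall_sub_eq_sub_or a with ha | ha
  · refine .inl ⟨g a - f a, fun b hab => ?_⟩
    rw [eq_add_of_sub_eq (h.sub_eq_sub_of_reflTransGen hinj ha hab)]
    abel
  · refine .inr ⟨g a + f a, fun b hab => ?_⟩
    have hinj' : ∀ ⦃a b⦄, R a b → (-f) a = (-f) b → a = b :=
      fun a b hR he => hinj hR (neg_injective he)
    rw [eq_add_of_sub_eq (h.neg_left.sub_eq_sub_of_reflTransGen hinj' ha hab)]
    simp only [Pi.neg_apply]
    abel

end StarIsometry

lemma Icc_symmDiff_Icc {α : Type*} [LinearOrder α] {a b c d : α} (hac : a ≤ c) (hcb : c ≤ b)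
    (hbd : b ≤ d) : symmDiff (Icc a b) (Icc c d) = Ico a c ∪ Ioc b d := by
  ext x
  simp only [mem_symmDiff, mem_Icc, mem_union, mem_Ico, mem_Ioc]
  grind

lemma ncard_Icc_symmDiff_Icc {a b c d : ℤ} (hac : a ≤ c) (hcb : c ≤ b) (hbd : b ≤ d) :
    ((symmDiff (Icc a b) (Icc c d)).ncard : ℤ) = c + d - (a + b) := by
  have hdisj : Disjoint (Ico a c) (Ioc b d) :=
    disjoint_left.2 fun x hx hx' => (hx.2.trans_le hcb).not_gt hx'.1
  rw [Icc_symmDiff_Icc hac hcb hbd, ncard_union_eq hdisj, ncard_eq_toFinset_card',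
    ncard_eq_toFinset_card', toFinset_Ico, toFinset_Ioc, Int.card_Ico, Int.card_Ioc]
  omega

section Placement

variable {V : Type*} {H : Set (Set V)} {p q : V → ℤ} {A B C : Set V}

/-- A tight representation of a hypergraph with finite hyperedges by intervals of `ℤ`. Unlike in
`IsTightIntervalRep`, the vertex set may be infinite and the positions used need not be an initial
segment, so that translations and reflections of `ℤ` act on placements. -/
structure IsTightPlacement (H : Set (Set V)) (p : V → ℤ) : Prop where
  injective : Function.Injective p
  finite : ∀ ⦃A⦄, A ∈ H → A.Finite
  ordConnected : ∀ ⦃A⦄, A ∈ H → (p '' A).OrdConnected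
  tight : ∀ ⦃A⦄, A ∈ H → ∀ ⦃B⦄, B ∈ H → B ⊆ A → B.Nonempty →
    (∃ m, IsLeast (p '' A) m ∧ IsLeast (p '' B) m) ∨
      ∃ m, IsGreatest (p '' A) m ∧ IsGreatest (p '' B) m

/-- The least position of a vertex of `A`; it is meaningful for finite nonempty `A`. -/
noncomputable def leftEnd (p : V → ℤ) (A : Set V) : ℤ := sInf (p '' A)

/-- The greatest position of a vertex of `A`; it is meaningful for finite nonempty `A`. -/
noncomputable def rightEnd (p : V → ℤ) (A : Set V) : ℤ := sSup (p '' A)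

/-- Twice the midpoint of the interval occupied by `A`, doubled so as to be an integer. -/
noncomputable def doubleMidpoint (p : V → ℤ) (A : Set V) : ℤ := leftEnd p A + rightEnd p A

namespace IsTightPlacement

lemma image_eq_Icc (hp : IsTightPlacement H p) (hA : A ∈ H) (hne : A.Nonempty) :
    p '' A = Icc (leftEnd p A) (rightEnd p A) := by
  have hfin : (p '' A).Finite := (hp.finite hA).image p
  exact (subset_Icc_csInf_csSup hfin.bddBelow hfin.bddAbove).antisymm <|
    (hp.ordConnected hA).out ((hne.image p).csInf_mem hfin) ((hne.image p).csSup_mem hfin)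

lemma mem_iff (hp : IsTightPlacement H p) (hA : A ∈ H) (hne : A.Nonempty) {v : V} :
    v ∈ A ↔ leftEnd p A ≤ p v ∧ p v ≤ rightEnd p A := by
  rw [← mem_Icc, ← hp.image_eq_Icc hA hne, hp.injective.mem_set_image]

lemma leftEnd_le_rightEnd (hp : IsTightPlacement H p) (hA : A ∈ H) (hne : A.Nonempty) :
    leftEnd p A ≤ rightEnd p A :=
  nonempty_Icc.1 (hp.image_eq_Icc hA hne ▸ hne.image p)

lemma ncard_eq (hp : IsTightPlacement H p) (hA : A ∈ H) (hne : A.Nonempty) :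
    (A.ncard : ℤ) = rightEnd p A - leftEnd p A + 1 := by
  have hle := hp.leftEnd_le_rightEnd hA hne
  rw [← ncard_image_of_injective A hp.injective, hp.image_eq_Icc hA hne, ncard_eq_toFinset_card',
    toFinset_Icc, Int.card_Icc]
  omega

lemma inter_nonempty_iff (hp : IsTightPlacement H p) (hA : A ∈ H) (hB : B ∈ H)
    (hneA : A.Nonempty) (hneB : B.Nonempty) :
    (A ∩ B).Nonempty ↔ leftEnd p A ≤ rightEnd p B ∧ leftEnd p B ≤ rightEnd p A := by
  have hleA := hp.leftEnd_le_rightEnd hA hneA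
  have hleB := hp.leftEnd_le_rightEnd hB hneB
  rw [← image_nonempty (f := p), image_inter hp.injective, hp.image_eq_Icc hA hneA,
    hp.image_eq_Icc hB hneB, Icc_inter_Icc, nonempty_Icc]
  omega

lemma not_strictly_nested (hp : IsTightPlacement H p) (hA : A ∈ H) (hB : B ∈ H)
    (hneA : A.Nonempty) (hneB : B.Nonempty) :
    ¬ (leftEnd p A < leftEnd p B ∧ rightEnd p B < rightEnd p A) := by
  rintro ⟨hleft, hright⟩
  have hBA : B ⊆ A := fun v hv => by
    rw [hp.mem_iff hB hneB] at hv
    exact (hp.mem_iff hA hneA).2 ⟨hleft.le.trans hv.1, hv.2.trans hright.le⟩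
  rcases hp.tight hA hB hBA hneB with ⟨m, hmA, hmB⟩ | ⟨m, hmA, hmB⟩
  · exact hleft.ne (hmA.csInf_eq.trans hmB.csInf_eq.symm)
  · exact hright.ne (hmB.csSup_eq.trans hmA.csSup_eq.symm)

lemma ends_le_total (hp : IsTightPlacement H p) (hA : A ∈ H) (hB : B ∈ H)
    (hneA : A.Nonempty) (hneB : B.Nonempty) :
    (leftEnd p A ≤ leftEnd p B ∧ rightEnd p A ≤ rightEnd p B) ∨
      (leftEnd p B ≤ leftEnd p A ∧ rightEnd p B ≤ rightEnd p A) := by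
  have hAB := hp.not_strictly_nested hA hB hneA hneB
  have hBA := hp.not_strictly_nested hB hA hneB hneA
  omega

lemma ncard_symmDiff_eq_of_le (hp : IsTightPlacement H p) (hA : A ∈ H) (hB : B ∈ H)
    (hAB : (A ∩ B).Nonempty) (hleft : leftEnd p A ≤ leftEnd p B)
    (hright : rightEnd p A ≤ rightEnd p B) :
    ((symmDiff A B).ncard : ℤ) = doubleMidpoint p B - doubleMidpoint p A := by
  have hmeet := ((hp.inter_nonempty_iff hA hB hAB.left hAB.right).1 hAB).2
  rw [← ncard_image_of_injective _ hp.injective, image_symmDiff hp.injective,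
    hp.image_eq_Icc hA hAB.left, hp.image_eq_Icc hB hAB.right,
    ncard_Icc_symmDiff_Icc hleft hmeet hright, doubleMidpoint, doubleMidpoint]

lemma abs_doubleMidpoint_sub (hp : IsTightPlacement H p) (hA : A ∈ H) (hB : B ∈ H)
    (hAB : (A ∩ B).Nonempty) :
    |doubleMidpoint p A - doubleMidpoint p B| = (symmDiff A B).ncard := by
  rcases hp.ends_le_total hA hB hAB.left hAB.right with ⟨hl, hr⟩ | ⟨hl, hr⟩
  · rw [abs_sub_comm, ← hp.ncard_symmDiff_eq_of_le hA hB hAB hl hr, Nat.abs_cast]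
  · rw [symmDiff_comm, ← hp.ncard_symmDiff_eq_of_le hB hA (inter_comm A B ▸ hAB) hl hr,
      Nat.abs_cast]

lemma eq_of_doubleMidpoint_eq (hp : IsTightPlacement H p) (hA : A ∈ H) (hB : B ∈ H)
    (hAB : (A ∩ B).Nonempty) (h : doubleMidpoint p A = doubleMidpoint p B) : A = B := by
  have hfin : (symmDiff A B).Finite := (hp.finite hA).symmDiff (hp.finite hB)
  have habs := hp.abs_doubleMidpoint_sub hA hB hAB
  rw [h, sub_self, abs_zero, eq_comm, Nat.cast_eq_zero, ncard_eq_zero hfin] at habs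
  exact symmDiff_eq_bot.1 habs

lemma abs_doubleMidpoint_sub_of_disjoint (hp : IsTightPlacement H p) (hA : A ∈ H) (hB : B ∈ H)
    (hC : C ∈ H) (hAB : (A ∩ B).Nonempty) (hAC : (A ∩ C).Nonempty) (hBC : ¬ (B ∩ C).Nonempty) :
    |doubleMidpoint p B - doubleMidpoint p C| =
      |doubleMidpoint p A - doubleMidpoint p B| + |doubleMidpoint p A - doubleMidpoint p C| := by
  have hmeetB := (hp.inter_nonempty_iff hA hB hAB.left hAB.right).1 hAB
  have hmeetC := (hp.inter_nonempty_iff hA hC hAC.left hAC.right).1 hAC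
  rw [hp.inter_nonempty_iff hB hC hAB.right hAC.right] at hBC
  have htotB := hp.ends_le_total hA hB hAB.left hAB.right
  have htotC := hp.ends_le_total hA hC hAC.left hAC.right
  have hbetween :
      (doubleMidpoint p B ≤ doubleMidpoint p A ∧ doubleMidpoint p A ≤ doubleMidpoint p C) ∨
        (doubleMidpoint p C ≤ doubleMidpoint p A ∧ doubleMidpoint p A ≤ doubleMidpoint p B) := by
    simp only [doubleMidpoint]
    omega
  grind

lemma starIsometric (hp : IsTightPlacement H p) (hq : IsTightPlacement H q) :
    StarIsometric (fun A B => A ∈ H ∧ B ∈ H ∧ (A ∩ B).Nonempty)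
      (doubleMidpoint p) (doubleMidpoint q) where
  edge A B := by
    rintro ⟨hA, hB, hAB⟩
    rw [abs_sub_comm, hp.abs_doubleMidpoint_sub hA hB hAB, abs_sub_comm,
      hq.abs_doubleMidpoint_sub hA hB hAB]
  star A B C := by
    rintro ⟨hA, hB, hAB⟩ ⟨-, hC, hAC⟩
    by_cases hBC : (B ∩ C).Nonempty
    · rw [hp.abs_doubleMidpoint_sub hB hC hBC, hq.abs_doubleMidpoint_sub hB hC hBC]
    · rw [hp.abs_doubleMidpoint_sub_of_disjoint hA hB hC hAB hAC hBC,
        hq.abs_doubleMidpoint_sub_of_disjoint hA hB hC hAB hAC hBC,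
        hp.abs_doubleMidpoint_sub hA hB hAB, hp.abs_doubleMidpoint_sub hA hC hAC,
        hq.abs_doubleMidpoint_sub hA hB hAB, hq.abs_doubleMidpoint_sub hA hC hAC]

lemma exists_doubleMidpoint_eq (hp : IsTightPlacement H p) (hq : IsTightPlacement H q)
    (hH : ConnectedHypergraph H) :
    (∃ t, ∀ A ∈ H, doubleMidpoint q A = doubleMidpoint p A + t) ∨
      ∃ t, ∀ A ∈ H, doubleMidpoint q A = t - doubleMidpoint p A := by
  rcases H.eq_empty_or_nonempty with rfl | ⟨A₀, hA₀⟩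
  · exact .inl ⟨0, by simp⟩
  have : Std.Symm fun A B => A ∈ H ∧ B ∈ H ∧ (A ∩ B).Nonempty :=
    ⟨fun A B ⟨hA, hB, hAB⟩ => ⟨hB, hA, inter_comm A B ▸ hAB⟩⟩
  exact ((hp.starIsometric hq).exists_eq_add_or_exists_eq_sub
    (fun A B ⟨hA, hB, hAB⟩ => hp.eq_of_doubleMidpoint_eq hA hB hAB) A₀).imp
    (fun ⟨t, ht⟩ => ⟨t, fun A hA => ht A (hH.2 A₀ hA₀ A hA)⟩)
    fun ⟨t, ht⟩ => ⟨t, fun A hA => ht A (hH.2 A₀ hA₀ A hA)⟩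

-- The division by `2` is exact when `A` is nonempty: twice the midpoint of `A` has the parity of
-- `A.ncard - 1` in every placement.
lemma image_eq_image_add_const (hp : IsTightPlacement H p) (hq : IsTightPlacement H q)
    (hA : A ∈ H) {t : ℤ} (ht : doubleMidpoint q A = doubleMidpoint p A + t) :
    q '' A = (fun v => p v + t / 2) '' A := by
  rcases A.eq_empty_or_nonempty with rfl | hne
  · simp only [image_empty]
  have hcard := (hp.ncard_eq hA hne).symm.trans (hq.ncard_eq hA hne)
  simp only [doubleMidpoint] at ht
  rw [← image_image (· + t / 2) p, hp.image_eq_Icc hA hne, hq.image_eq_Icc hA hne,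
    image_add_const_Icc]
  congr 1 <;> omega

lemma image_eq_image_const_sub (hp : IsTightPlacement H p) (hq : IsTightPlacement H q)
    (hA : A ∈ H) {t : ℤ} (ht : doubleMidpoint q A = t - doubleMidpoint p A) :
    q '' A = (fun v => t / 2 - p v) '' A := by
  rcases A.eq_empty_or_nonempty with rfl | hne
  · simp only [image_empty]
  have hcard := (hp.ncard_eq hA hne).symm.trans (hq.ncard_eq hA hne)
  simp only [doubleMidpoint] at ht
  rw [← image_image (t / 2 - ·) p, hp.image_eq_Icc hA hne, hq.image_eq_Icc hA hne,
    image_const_sub_Icc]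
  congr 1 <;> omega

end IsTightPlacement

lemma exists_perm_of_image_eq_image {α : Type*} {f g : V → α} (hf : Function.Injective f)
    (hg : Function.Injective g) (hcover : ∀ x, ∃ A ∈ H, x ∈ A)
    (himage : ∀ A ∈ H, f '' A = g '' A) :
    ∃ π : Equiv.Perm V, (∀ x, ∀ A ∈ H, x ∈ A ↔ π x ∈ A) ∧ ∀ x, f x = g (π x) := by
  have hunion : ⋃₀ H = univ := eq_univ_of_forall hcover
  have hrange : range f = range g := by
    rw [← image_univ, ← image_univ, ← hunion, image_sUnion, image_sUnion, image_congr himage]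
  let π : Equiv.Perm V :=
    (Equiv.ofInjective f hf).trans ((Equiv.setCongr hrange).trans (Equiv.ofInjective g hg).symm)
  have hπ : ∀ x, f x = g (π x) := fun x =>
    (Equiv.apply_ofInjective_symm hg ⟨f x, hrange ▸ mem_range_self x⟩).symm
  refine ⟨π, fun x A hA => ?_, hπ⟩
  rw [← hf.mem_set_image, himage A hA, hπ, hg.mem_set_image]

theorem stmt7_general (hH : ConnectedHypergraph H) (hp : IsTightPlacement H p)
    (hq : IsTightPlacement H q) :
    ∃ π : Equiv.Perm V, (∀ x, ∀ A ∈ H, x ∈ A ↔ π x ∈ A) ∧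
      ((∃ s, ∀ x, q x = p (π x) + s) ∨ ∃ s, ∀ x, q x = s - p (π x)) := by
  rcases hp.exists_doubleMidpoint_eq hq hH with ⟨t, ht⟩ | ⟨t, ht⟩
  · obtain ⟨π, htwins, hπ⟩ := exists_perm_of_image_eq_image hq.injective
      ((add_left_injective (t / 2)).comp hp.injective) hH.1
      fun A hA => hp.image_eq_image_add_const hq hA (ht A hA)
    exact ⟨π, htwins, .inl ⟨t / 2, hπ⟩⟩
  · obtain ⟨π, htwins, hπ⟩ := exists_perm_of_image_eq_image hq.injective
      ((sub_right_injective (b := t / 2)).comp hp.injective) hH.1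
      fun A hA => hp.image_eq_image_const_sub hq hA (ht A hA)
    exact ⟨π, htwins, .inr ⟨t / 2, hπ⟩⟩

lemma IsTightIntervalRep.isTightPlacement {n : ℕ} {lam : V ≃ Fin n}
    (h : IsTightIntervalRep H lam) : IsTightPlacement H fun v => ((lam v : ℕ) : ℤ) where
  injective := (Nat.cast_injective.comp Fin.val_injective).comp lam.injective
  finite A _ := (toFinite (lam '' A)).of_finite_image lam.injective.injOn
  ordConnected A hA := by
    refine ⟨?_⟩
    rintro _ ⟨u, hu, rfl⟩ _ ⟨w, hw, rfl⟩ y ⟨huy, hyw⟩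
    lift y to ℕ using (Nat.cast_nonneg _).trans huy
    rw [Nat.cast_le] at huy hyw
    obtain ⟨v, hv, hvy⟩ := h.1 A hA (lam u) ⟨y, hyw.trans_lt (lam w).isLt⟩ (lam w) huy hyw
      (mem_image_of_mem lam hu) (mem_image_of_mem lam hw)
    exact ⟨v, hv, by simp only [hvy]⟩
  tight A hA B hB hBA hne := by
    rcases h.2 A hA B hB hBA hne with ⟨_, ⟨v, hv, rfl⟩, hm⟩ | ⟨_, ⟨v, hv, rfl⟩, hm⟩
    · have hle : ∀ w ∈ A, ((lam v : ℕ) : ℤ) ≤ (lam w : ℕ) := fun w hw => by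
        exact_mod_cast hm _ (mem_image_of_mem lam hw)
      exact .inl ⟨_, ⟨⟨v, hBA hv, rfl⟩, forall_mem_image.2 hle⟩,
        ⟨v, hv, rfl⟩, forall_mem_image.2 fun w hw => hle w (hBA hw)⟩
    · have hle : ∀ w ∈ A, ((lam w : ℕ) : ℤ) ≤ (lam v : ℕ) := fun w hw => by
        exact_mod_cast hm _ (mem_image_of_mem lam hw)
      exact .inr ⟨_, ⟨⟨v, hBA hv, rfl⟩, forall_mem_image.2 hle⟩,
        ⟨v, hv, rfl⟩, forall_mem_image.2 fun w hw => hle w (hBA hw)⟩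

end Placement

section FinEquiv

variable {V : Type*} {n : ℕ} {s : ℤ}

lemma eq_of_val_eq_val_add (e e' : V ≃ Fin n)
    (h : ∀ x, ((e x : ℕ) : ℤ) = ((e' x : ℕ) : ℤ) + s) : e = e' := by
  have hmono : StrictMono (e'.symm.trans e) := fun i j hij => by
    have hi := h (e'.symm i)
    have hj := h (e'.symm j)
    simp only [Equiv.apply_symm_apply] at hi hj
    simp only [Equiv.trans_apply, Fin.lt_def] at hij ⊢
    omega
  ext1 x
  simpa using congr_fun hmono.eq_id (e' x)

lemma eq_trans_revPerm_of_val_eq_sub_val (e e' : V ≃ Fin n)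
    (h : ∀ x, ((e x : ℕ) : ℤ) = s - ((e' x : ℕ) : ℤ)) : e = e'.trans Fin.revPerm := by
  refine eq_of_val_eq_val_add (s := s - (n - 1)) e _ fun x => ?_
  have hx := h x
  have := (e' x).isLt
  simp only [Equiv.trans_apply, Fin.revPerm_apply, Fin.val_rev]
  omega

end FinEquiv

/-- A connected interval hypergraph has, up to reflection and
permutation of twins, a unique tight interval representation. -/
theorem stmt7 {V : Type*} [Fintype V] (H : Set (Set V))
    (hconn : ConnectedHypergraph H)
    (lam lam' : V ≃ Fin (Fintype.card V))
    (h1 : IsTightIntervalRep H lam) (h2 : IsTightIntervalRep H lam') :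
    ∃ π : Equiv.Perm V, (∀ x, ∀ A ∈ H, x ∈ A ↔ π x ∈ A) ∧
      ((∀ x, lam' x = lam (π x)) ∨ (∀ x, lam' x = (lam (π x)).rev)) := by
  obtain ⟨π, htwins, h⟩ := stmt7_general hconn h1.isTightPlacement h2.isTightPlacement
  exact ⟨π, htwins, h.imp
    (fun ⟨_, hs⟩ => Equiv.congr_fun (eq_of_val_eq_val_add lam' (π.trans lam) hs))
    fun ⟨_, hs⟩ => Equiv.congr_fun (eq_trans_revPerm_of_val_eq_sub_val lam' (π.trans lam) hs)⟩
end
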